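/- arXiv:2005.08201 — 4 statements merged into one kernel-verified Lean document; each statement's English description precedes it below -/
import Mathlib

section
/- Let F_q be a finite field of odd characteristic p with q = p^n elements. If q ≡ -1 (mod 8) or q ≡ -3 (mod 8), then the group algebra F_q[QD_16] is isomorphic as an F_q-algebra to F_q ⊕ F_q ⊕ F_q ⊕ F_q ⊕ M(2,F_q) ⊕ M(2,F_{q^2}), where F_{q^2} is the field with q^2 elements. -/
/-- Relations for the quasidihedral group `QD_{2^k}`:
`a^(2^(k-1)) = 1`, `x^2 = 1`, `x * a * x = a^(2^(k-2)-1)`. -/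
def qdRels (k : ℕ) : Set (FreeGroup (Fin 2)) :=
  {FreeGroup.of 0 ^ (2 ^ (k - 1)), FreeGroup.of 1 ^ 2,
    FreeGroup.of 1 * FreeGroup.of 0 * FreeGroup.of 1 * (FreeGroup.of 0 ^ (2 ^ (k - 2) - 1))⁻¹}

/-- The quasidihedral group of order 16: `⟨a, x | a^8 = x^2 = 1, x a x = a^3⟩`. -/
def QD16 : Type := PresentedGroup (qdRels 4)

instance : Group QD16 := inferInstanceAs (Group (PresentedGroup (qdRels 4)))

namespace QD16aux

/-- The generator `a`. -/
def ga : QD16 := PresentedGroup.of (rels := qdRels 4) 0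
/-- The generator `x`. -/
def gx : QD16 := PresentedGroup.of (rels := qdRels 4) 1

lemma ga_pow : ga ^ 8 = 1 :=
  PresentedGroup.one_of_mem (rels := qdRels 4) (x := FreeGroup.of 0 ^ 8) (by simp [qdRels])

lemma gx_sq : gx ^ 2 = 1 :=
  PresentedGroup.one_of_mem (rels := qdRels 4) (x := FreeGroup.of 1 ^ 2) (by simp [qdRels])

lemma gxax : gx * ga * gx = ga ^ 3 := by
  have h : gx * ga * gx * (ga ^ 3)⁻¹ = 1 :=
    PresentedGroup.one_of_mem (rels := qdRels 4)
      (x := FreeGroup.of 1 * FreeGroup.of 0 * FreeGroup.of 1 * (FreeGroup.of 0 ^ 3)⁻¹)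
      (by simp [qdRels])
  exact mul_inv_eq_one.mp h

lemma gxa : gx * ga = ga ^ 3 * gx := by
  rw [← gxax, mul_assoc (gx * ga), ← pow_two, gx_sq, mul_one]

lemma gxa_pow (i : ℕ) : gx * ga ^ i = ga ^ (3 * i) * gx := by
  induction i with
  | zero => simp
  | succ k ih =>
    rw [pow_succ, ← mul_assoc, ih, mul_assoc, gxa, ← mul_assoc, ← pow_add]
    rfl

lemma normal_form (g : QD16) : ∃ i j : ℕ, g = ga ^ i * gx ^ j := by
  have hg : g ∈ Subgroup.closure (Set.range (PresentedGroup.of (rels := qdRels 4))) := by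
    rw [PresentedGroup.closure_range_of]; trivial
  have ha : ∀ y : QD16, (∃ i j : ℕ, y = ga ^ i * gx ^ j) → ∃ i j : ℕ, ga * y = ga ^ i * gx ^ j := by
    rintro y ⟨i, j, rfl⟩
    exact ⟨i + 1, j, by rw [pow_succ', mul_assoc]⟩
  have hx : ∀ y : QD16, (∃ i j : ℕ, y = ga ^ i * gx ^ j) → ∃ i j : ℕ, gx * y = ga ^ i * gx ^ j := by
    rintro y ⟨i, j, rfl⟩
    exact ⟨3 * i, j + 1, by rw [← mul_assoc, gxa_pow, pow_succ', mul_assoc]⟩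
  have hai : ga⁻¹ = ga ^ 7 := by
    rw [inv_eq_iff_mul_eq_one, ← pow_succ']; exact ga_pow
  have hxi : gx⁻¹ = gx := by
    rw [inv_eq_iff_mul_eq_one, ← pow_two]; exact gx_sq
  refine Subgroup.closure_induction_left (p := fun y _ => ∃ i j : ℕ, y = ga ^ i * gx ^ j)
    ⟨0, 0, by simp⟩ ?_ ?_ hg
  · rintro _ ⟨k, rfl⟩ y _ hy
    fin_cases k
    · exact ha y hy
    · exact hx y hy
  · rintro _ ⟨k, rfl⟩ y _ hy
    fin_cases k
    · change ∃ i j : ℕ, ga⁻¹ * y = ga ^ i * gx ^ j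
      obtain ⟨i, j, rfl⟩ := hy
      exact ⟨7 + i, j, by rw [hai, pow_add, mul_assoc]⟩
    · change ∃ i j : ℕ, gx⁻¹ * y = ga ^ i * gx ^ j
      rw [hxi]; exact hx y hy

lemma surj : Function.Surjective
    (fun t : Fin 8 × Fin 2 => ga ^ (t.1 : ℕ) * gx ^ (t.2 : ℕ)) := by
  intro g
  obtain ⟨i, j, rfl⟩ := normal_form g
  refine ⟨(⟨i % 8, Nat.mod_lt _ (by norm_num)⟩, ⟨j % 2, Nat.mod_lt _ (by norm_num)⟩), ?_⟩
  change ga ^ (i % 8) * gx ^ (j % 2) = _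
  rw [pow_mod_eq_pow_of ga_pow, pow_mod_eq_pow_of gx_sq]
where
  pow_mod_eq_pow_of {g : QD16} {m i : ℕ} (h : g ^ m = 1) : g ^ (i % m) = g ^ i := by
    conv_rhs => rw [← Nat.mod_add_div i m, pow_add, pow_mul, h, one_pow, mul_one]

instance : Finite QD16 := Finite.of_surjective _ surj

lemma card_le : Nat.card QD16 ≤ 16 := by
  have := Nat.card_le_card_of_surjective _ surj
  simpa using this

lemma exists_hom {M : Type*} [Monoid M] (A X : M) (hA : A ^ 8 = 1) (hX : X ^ 2 = 1)
    (h : X * A * X = A ^ 3) : ∃ φ : QD16 →* M, φ ga = A ∧ φ gx = X := by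
  let uA : Mˣ := ⟨A, A ^ 7, by rw [← pow_succ', hA], by rw [← pow_succ, hA]⟩
  let uX : Mˣ := ⟨X, X, by rw [← pow_two, hX], by rw [← pow_two, hX]⟩
  have hr : ∀ r ∈ qdRels 4, FreeGroup.lift (![uA, uX] : Fin 2 → Mˣ) r = 1 := by
    intro r hr
    simp only [qdRels, Set.mem_insert_iff, Set.mem_singleton_iff] at hr
    rcases hr with rfl | rfl | rfl
    · ext; simpa [uA] using hA
    · ext; simpa [uX] using hX
    · have : uX * uA * uX = uA ^ 3 := by ext; simpa [uA, uX] using h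
      simp [this]
  refine ⟨(Units.coeHom M).comp (PresentedGroup.toGroup hr), ?_, ?_⟩
  · change ((PresentedGroup.toGroup hr (PresentedGroup.of 0) : Mˣ) : M) = A
    rw [PresentedGroup.toGroup.of]; rfl
  · change ((PresentedGroup.toGroup hr (PresentedGroup.of 1) : Mˣ) : M) = X
    rw [PresentedGroup.toGroup.of]; rfl

/-- Arithmetic of `K`. -/
lemma exists_root (F : Type) [Field F] [Fintype F]
    (h8 : Fintype.card F % 8 = 7 ∨ Fintype.card F % 8 = 5)
    (K : Type) [Field K] [Fintype K] [Algebra F K]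
    (hK : Fintype.card K = Fintype.card F ^ 2) (h2 : (2 : K) ≠ 0) :
    ∃ z : K, z ^ 4 = -1 ∧ ∀ k : K, ∃ u v : F, k = algebraMap F K u + algebraMap F K v * (z + z ^ 3) := by
  have hK8 : Fintype.card K % 8 = 1 := by
    rw [hK, Nat.pow_mod]; rcases h8 with h | h <;> rw [h]
  obtain ⟨d, hd⟩ : IsSquare (2 : K) := FiniteField.isSquare_two_iff.mpr (by omega)
  obtain ⟨s, hs⟩ : IsSquare (-2 : K) := FiniteField.isSquare_neg_two_iff.mpr (by omega)
  have hns : ¬ IsSquare (-2 : F) := by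
    rw [FiniteField.isSquare_neg_two_iff]; omega
  have hz3 : (s + d) / 2 + ((s + d) / 2) ^ 3 = s := by
    field_simp
    linear_combination (-s - 3 * d) * hs + (-3 * s - d) * hd
  refine ⟨(s + d) / 2, ?_, ?_⟩
  · have h1 : ((s + d) / 2) ^ 2 = s * d / 2 := by
      field_simp
      linear_combination -hs - hd
    rw [show ((s + d) / 2) ^ 4 = (((s + d) / 2) ^ 2) ^ 2 by ring, h1]
    field_simp
    linear_combination (-d * d) * hs + 2 * hd
  · rw [hz3]
    let f : F × F → K := fun t => algebraMap F K t.1 + algebraMap F K t.2 * s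
    have hf : Function.Bijective f := by
      rw [Fintype.bijective_iff_injective_and_card]
      refine ⟨?_, by rw [Fintype.card_prod, hK, pow_two]⟩
      rintro ⟨u, v⟩ ⟨u', v'⟩ he
      simp only [f] at he
      have hv : v = v' := by
        by_contra hne
        have hne' : v - v' ≠ 0 := sub_ne_zero.mpr hne
        apply hns
        refine ⟨(u' - u) / (v - v'), ?_⟩
        apply (algebraMap F K).injective
        have hneK : algebraMap F K v - algebraMap F K v' ≠ 0 := by
          rw [← map_sub]; exact (map_ne_zero _).mpr hne'
        have : s = (algebraMap F K u' - algebraMap F K u) / (algebraMap F K v - algebraMap F K v') := by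
          field_simp
          linear_combination he
        simp only [map_neg, map_mul, map_div₀, map_sub, map_ofNat]
        rw [← this, hs]
      subst hv
      have hu : algebraMap F K u = algebraMap F K u' := by linear_combination he
      rw [(algebraMap F K).injective hu]
    intro k
    obtain ⟨⟨u, v⟩, h⟩ := hf.2 k
    exact ⟨u, v, h.symm⟩

section target
set_option linter.unusedSectionVars false
variable (F : Type) [Field F] (K : Type) [Field K] [Algebra F K]

/-- The target algebra. -/
abbrev T := F × F × F × F × Matrix (Fin 2) (Fin 2) F × Matrix (Fin 2) (Fin 2) K

/-- image of `a` -/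
def al (z : K) : T F K := (1, 1, -1, -1, !![0, -1; 1, 0], !![z, 0; 0, z ^ 3])
/-- image of `x` -/
def xi : T F K := (1, -1, 1, -1, !![1, 0; 0, -1], !![0, 1; 1, 0])

variable {F K}

lemma al2 (z : K) : al F K z ^ 2 = (1, 1, 1, 1, -1, !![z ^ 2, 0; 0, z ^ 6]) := by
  rw [pow_two]
  simp only [al, Prod.mk_mul_mk, Matrix.mul_fin_two, Prod.mk.injEq]
  refine ⟨by ring, by ring, by ring, by ring, ?_, ?_⟩ <;>
  · ext i j; fin_cases i <;> fin_cases j <;> simp <;> ring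

lemma al3 (z : K) (hz : z ^ 4 = -1) :
    al F K z ^ 3 = (1, 1, -1, -1, !![0, 1; -1, 0], !![z ^ 3, 0; 0, z]) := by
  rw [pow_succ, al2]
  have : z ^ 6 * z ^ 3 = z := by linear_combination z * (z ^ 4 - 1) * hz
  simp only [al, Prod.mk_mul_mk, Prod.mk.injEq]
  refine ⟨by ring, by ring, by ring, by ring, ?_, ?_⟩ <;>
  · ext i j; fin_cases i <;> fin_cases j <;> simp [this] <;> ring

lemma al4 (z : K) (hz : z ^ 4 = -1) :
    al F K z ^ 4 = (1, 1, 1, 1, 1, -1) := by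
  rw [pow_succ, al3 z hz]
  have h1 : z ^ 3 * z = -1 := by linear_combination hz
  have h2 : z * z ^ 3 = -1 := by linear_combination hz
  simp only [al, Prod.mk_mul_mk, Prod.mk.injEq]
  refine ⟨by ring, by ring, by ring, by ring, ?_, ?_⟩ <;>
  · ext i j; fin_cases i <;> fin_cases j <;> simp [h1, h2]

lemma al8 (z : K) (hz : z ^ 4 = -1) : al F K z ^ 8 = 1 := by
  rw [show 8 = 4 * 2 from rfl, pow_mul, al4 z hz, pow_two]
  simp [Prod.ext_iff]

lemma xi2 : xi F K ^ 2 = 1 := by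
  rw [pow_two]
  simp only [xi, Prod.mk_mul_mk, Prod.ext_iff]
  refine ⟨by simp, by simp, by simp, by simp, ?_, ?_⟩ <;>
  · ext i j; fin_cases i <;> fin_cases j <;> simp

lemma xax (z : K) (hz : z ^ 4 = -1) : xi F K * al F K z * xi F K = al F K z ^ 3 := by
  rw [al3 z hz]
  simp only [xi, al, Prod.mk_mul_mk, Prod.mk.injEq]
  refine ⟨by simp, by simp, by simp, by simp, ?_, ?_⟩ <;>
  · ext i j; fin_cases i <;> fin_cases j <;> simp

lemma top_of_mem (h2 : (2 : F) ≠ 0) (h2K : (2 : K) ≠ 0) (z : K) (hz : z ^ 4 = -1)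
    (hspan : ∀ k : K, ∃ u v : F, k = algebraMap F K u + algebraMap F K v * (z + z ^ 3))
    (S : Subalgebra F (T F K)) (ha : al F K z ∈ S) (hx : xi F K ∈ S) (t : T F K) : t ∈ S := by
  have half : (2⁻¹ : F) + 2⁻¹ = 1 := by field_simp; norm_num
  have ha2 := S.pow_mem ha 2
  have ha3 := S.pow_mem ha 3
  have ha4 := S.pow_mem ha 4
  rw [al2] at ha2
  rw [al3 z hz] at ha3
  rw [al4 z hz] at ha4
  have e6 : ((0, 0, 0, 0, 0, 1) : T F K) ∈ S := by
    have := S.smul_mem (S.sub_mem S.one_mem ha4) (2⁻¹ : F)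
    convert this using 1
    simp [Prod.ext_iff, smul_add, ← add_smul, half]
  have e5 : ((0, 0, 0, 0, 1, 0) : T F K) ∈ S := by
    have := S.smul_mem (S.sub_mem (S.sub_mem S.one_mem ha2) (S.mul_mem e6 (S.sub_mem S.one_mem ha2))) (2⁻¹ : F)
    convert this using 1
    simp [Prod.ext_iff, smul_add, ← add_smul, half]
  have e0 : ((1, 1, 1, 1, 0, 0) : T F K) ∈ S := by
    have := (S.sub_mem (S.sub_mem S.one_mem e5) e6)
    convert this using 1
    simp [Prod.ext_iff]
  have lin : ∀ f1 f2 f3 f4 : F, ((f1, f2, f3, f4, 0, 0) : T F K) ∈ S := by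
    intro f1 f2 f3 f4
    have hA : ((1, 1, -1, -1, 0, 0) : T F K) ∈ S := by
      convert S.mul_mem e0 ha using 1; simp [al]
    have hX : ((1, -1, 1, -1, 0, 0) : T F K) ∈ S := by
      convert S.mul_mem e0 hx using 1; simp [xi]
    have hAX : ((1, -1, -1, 1, 0, 0) : T F K) ∈ S := by
      convert S.mul_mem hA hX using 1; simp
    have := S.add_mem (S.add_mem (S.add_mem (S.smul_mem e0 ((f1 + f2 + f3 + f4) / (2 * 2)))
      (S.smul_mem hA ((f1 + f2 - f3 - f4) / (2 * 2))))
      (S.smul_mem hX ((f1 - f2 + f3 - f4) / (2 * 2))))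
      (S.smul_mem hAX ((f1 - f2 - f3 + f4) / (2 * 2)))
    convert this using 1
    simp only [Prod.smul_mk, Prod.mk_add_mk, smul_zero, add_zero, smul_eq_mul, Prod.mk.injEq, and_true]
    refine ⟨?_, ?_, ?_, ?_⟩ <;> field_simp <;> ring
  have mat : ∀ M : Matrix (Fin 2) (Fin 2) F, ((0, 0, 0, 0, M, 0) : T F K) ∈ S := by
    intro M
    have hA : ((0, 0, 0, 0, !![0, -1; 1, 0], 0) : T F K) ∈ S := by
      convert S.mul_mem e5 ha using 1; simp [al]
    have hX : ((0, 0, 0, 0, !![1, 0; 0, -1], 0) : T F K) ∈ S := by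
      convert S.mul_mem e5 hx using 1; simp [xi]
    have hAX : ((0, 0, 0, 0, !![0, 1; 1, 0], 0) : T F K) ∈ S := by
      convert S.mul_mem hA hX using 1; simp
    have := S.add_mem (S.add_mem (S.add_mem (S.smul_mem e5 ((M 0 0 + M 1 1) / 2))
      (S.smul_mem hX ((M 0 0 - M 1 1) / 2)))
      (S.smul_mem hAX ((M 0 1 + M 1 0) / 2)))
      (S.smul_mem hA ((M 1 0 - M 0 1) / 2))
    convert this using 1
    simp only [Prod.smul_mk, Prod.mk_add_mk, smul_zero, add_zero, Prod.mk.injEq, and_true, true_and]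
    ext i j; fin_cases i <;> fin_cases j <;> simp <;> field_simp <;> ring
  have matK : ∀ M : Matrix (Fin 2) (Fin 2) K, ((0, 0, 0, 0, 0, M) : T F K) ∈ S := by
    intro M
    have hA : ((0, 0, 0, 0, 0, !![z, 0; 0, z ^ 3]) : T F K) ∈ S := by
      convert S.mul_mem e6 ha using 1; simp [al]
    have hA3 : ((0, 0, 0, 0, 0, !![z ^ 3, 0; 0, z]) : T F K) ∈ S := by
      convert S.mul_mem e6 ha3 using 1; simp
    have hX : ((0, 0, 0, 0, 0, !![0, 1; 1, 0]) : T F K) ∈ S := by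
      convert S.mul_mem e6 hx using 1; simp [xi]
    have sc : ∀ k : K, ((0, 0, 0, 0, 0, !![k, 0; 0, k]) : T F K) ∈ S := by
      intro k
      obtain ⟨u, v, rfl⟩ := hspan k
      have := S.add_mem (S.smul_mem e6 u) (S.smul_mem (S.add_mem hA hA3) v)
      convert this using 1
      simp only [Prod.smul_mk, Prod.mk_add_mk, smul_zero, add_zero, Prod.mk.injEq, true_and]
      ext i j; fin_cases i <;> fin_cases j <;> simp [Algebra.algebraMap_eq_smul_one]
      ring
    have hd : (z - z ^ 3) * (z - z ^ 3) = 2 := by linear_combination (z ^ 2 - 2) * hz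
    have hD : ((0, 0, 0, 0, 0, !![1, 0; 0, -1]) : T F K) ∈ S := by
      have := S.mul_mem (sc ((z - z ^ 3) / 2)) (S.sub_mem hA hA3)
      convert this using 1
      simp only [Prod.mk_mul_mk, Prod.mk_sub_mk, sub_zero, mul_zero, Prod.mk.injEq, true_and]
      ext i j; fin_cases i <;> fin_cases j <;> simp <;> field_simp <;> first | linear_combination -hd | linear_combination hd
    have hDX : ((0, 0, 0, 0, 0, !![0, 1; -1, 0]) : T F K) ∈ S := by
      convert S.mul_mem hD hX using 1; simp
    have := S.add_mem (S.add_mem (S.add_mem (sc ((M 0 0 + M 1 1) / 2))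
      (S.mul_mem (sc ((M 0 0 - M 1 1) / 2)) hD))
      (S.mul_mem (sc ((M 0 1 + M 1 0) / 2)) hX))
      (S.mul_mem (sc ((M 0 1 - M 1 0) / 2)) hDX)
    convert this using 1
    simp only [Prod.mk_mul_mk, Prod.mk_add_mk, mul_zero, add_zero, Prod.mk.injEq, true_and]
    ext i j; fin_cases i <;> fin_cases j <;> simp <;> field_simp <;> ring
  obtain ⟨f1, f2, f3, f4, M, N⟩ := t
  convert S.add_mem (S.add_mem (lin f1 f2 f3 f4) (mat M)) (matK N) using 1
  simp

end target

end QD16aux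

open QD16aux in
/-- For `q ≡ -1, -3 (mod 8)` (i.e. `q % 8 = 7` or `q % 8 = 5`),
`F_q[QD_16] ≅ F_q⁴ ⊕ M(2,F_q) ⊕ M(2,F_{q²})`. -/
theorem groupAlgebra_QD16_wedderburn_neg_one_three (F : Type) [Field F] [Fintype F]
    (p n : ℕ) [Fact p.Prime] (hp : Odd p) [CharP F p]
    (hn : 0 < n) (hq : Fintype.card F = p ^ n)
    (h8 : Fintype.card F % 8 = 7 ∨ Fintype.card F % 8 = 5)
    (K : Type) [Field K] [Fintype K] [Algebra F K]
    (hK : Fintype.card K = Fintype.card F ^ 2) :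
    Nonempty (MonoidAlgebra F QD16 ≃ₐ[F]
      (F × F × F × F × Matrix (Fin 2) (Fin 2) F × Matrix (Fin 2) (Fin 2) K)) := by
  have h2 : (2 : F) ≠ 0 := by
    apply Ring.two_ne_zero
    intro h
    have := FiniteField.even_card_of_char_two h
    omega
  have h2K : (2 : K) ≠ 0 := by
    have := (map_ne_zero (algebraMap F K)).mpr h2
    rwa [map_ofNat] at this
  obtain ⟨z, hz, hspan⟩ := exists_root F h8 K hK h2K
  obtain ⟨φ, hφa, hφx⟩ := exists_hom (al F K z) (xi F K) (al8 z hz) xi2 (xax z hz)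
  let Φ : MonoidAlgebra F QD16 →ₐ[F] T F K := MonoidAlgebra.lift F (T F K) QD16 φ
  have hsurj : Function.Surjective Φ := by
    intro t
    have := top_of_mem h2 h2K z hz hspan Φ.range
      ⟨MonoidAlgebra.of F QD16 ga, by simp [Φ, hφa]⟩
      ⟨MonoidAlgebra.of F QD16 gx, by simp [Φ, hφx]⟩ t
    exact this
  have hfK : Module.finrank F K = 2 := by
    have := Module.card_eq_pow_finrank (K := F) (V := K)
    rw [hK] at this
    exact (Nat.pow_right_injective Fintype.one_lt_card this).symm
  have hfT : Module.finrank F (T F K) = 16 := by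
    simp [T, Module.finrank_prod, Module.finrank_matrix, hfK]
  have : Module.Finite F (MonoidAlgebra F QD16) := Module.Finite.of_basis (MonoidAlgebra.basis QD16 F)
  have hfM : Module.finrank F (MonoidAlgebra F QD16) ≤ 16 := by
    rw [Module.finrank_eq_nat_card_basis (MonoidAlgebra.basis QD16 F)]
    exact card_le
  have hle := LinearMap.finrank_le_finrank_of_surjective (f := Φ.toLinearMap) hsurj
  have hinj : Function.Injective Φ :=
    (LinearMap.injective_iff_surjective_of_finrank_eq_finrank (f := Φ.toLinearMap)
      (by omega)).mpr hsurj
  exact ⟨AlgEquiv.ofBijective Φ ⟨hinj, hsurj⟩⟩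
end

section
/- Let F_q be a finite field of odd characteristic p with q = p^n elements. If q ≡ -1 (mod 8) or q ≡ -3 (mod 8), then the unit group U(F_q[QD_16]) of the group algebra F_q[QD_16] is isomorphic to C_{q-1}^4 × GL(2,F_q) × GL(2,F_{q^2}), where F_{q^2} is the field with q^2 elements. -/
namespace QDAux

def ga : QD16 := PresentedGroup.of (rels := qdRels 4) 0
def gx : QD16 := PresentedGroup.of (rels := qdRels 4) 1

lemma ga_pow : ga ^ 8 = 1 := by
  have h : (FreeGroup.of 0 ^ (2 ^ (4 - 1)) : FreeGroup (Fin 2)) ∈ qdRels 4 := by simp [qdRels]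
  have := PresentedGroup.one_of_mem h
  exact this

lemma gx_pow : gx ^ 2 = 1 := by
  have h : (FreeGroup.of 1 ^ 2 : FreeGroup (Fin 2)) ∈ qdRels 4 := by simp [qdRels]
  have := PresentedGroup.one_of_mem h
  exact this

lemma g_rel : gx * ga * gx = ga ^ 3 := by
  have h : (FreeGroup.of 1 * FreeGroup.of 0 * FreeGroup.of 1 *
      (FreeGroup.of 0 ^ (2 ^ (4 - 2) - 1))⁻¹ : FreeGroup (Fin 2)) ∈ qdRels 4 := by simp [qdRels]
  have := PresentedGroup.one_of_mem h
  rw [map_mul, map_inv, mul_inv_eq_one] at this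
  exact this

lemma gx_ga_pow (i : ℕ) : gx * ga ^ i = ga ^ (3 * i) * gx := by
  have h1 : gx * ga = ga ^ 3 * gx := by
    rw [← g_rel, mul_assoc _ gx gx, ← pow_two, gx_pow, mul_one]
  induction i with
  | zero => simp
  | succ i ih =>
    rw [pow_succ, ← mul_assoc, ih, mul_assoc, h1, ← mul_assoc, ← pow_add]
    rfl

lemma g_form (g : QD16) : ∃ i j : ℕ, g = ga ^ i * gx ^ j := by
  have hg : g ∈ Subgroup.closure (Set.range (PresentedGroup.of (rels := qdRels 4))) := by
    rw [PresentedGroup.closure_range_of]; trivial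
  have ha : ∀ y : QD16, (∃ i j : ℕ, y = ga ^ i * gx ^ j) → ∃ i j : ℕ, ga * y = ga ^ i * gx ^ j := by
    rintro y ⟨i, j, rfl⟩
    exact ⟨i + 1, j, by rw [pow_succ', mul_assoc]⟩
  have hx : ∀ y : QD16, (∃ i j : ℕ, y = ga ^ i * gx ^ j) → ∃ i j : ℕ, gx * y = ga ^ i * gx ^ j := by
    rintro y ⟨i, j, rfl⟩
    exact ⟨3 * i, j + 1, by rw [← mul_assoc, gx_ga_pow, pow_succ', mul_assoc]⟩
  have hai : ga⁻¹ = ga ^ 7 := by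
    rw [inv_eq_iff_mul_eq_one, ← pow_succ', ga_pow]
  have hxi : gx⁻¹ = gx := by
    rw [inv_eq_iff_mul_eq_one, ← pow_two, gx_pow]
  induction hg using Subgroup.closure_induction_left with
  | one => exact ⟨0, 0, by rw [pow_zero, pow_zero, mul_one]; rfl⟩
  | mul_left y hy z hz ih =>
    obtain ⟨k, rfl⟩ := hy
    fin_cases k
    · exact ha _ ih
    · exact hx _ ih
  | inv_mul_cancel y hy z hz ih =>
    obtain ⟨k, rfl⟩ := hy
    fin_cases k
    · change ∃ i j : ℕ, ga⁻¹ * z = _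
      obtain ⟨i, j, rfl⟩ := ih
      exact ⟨7 + i, j, by rw [hai, pow_add, mul_assoc]⟩
    · change ∃ i j : ℕ, gx⁻¹ * z = _
      rw [hxi]
      exact hx _ ih

lemma pow_mod_aux {g : QD16} {m : ℕ} (h : g ^ m = 1) (i : ℕ) : g ^ (i % m) = g ^ i := by
  conv_rhs => rw [← Nat.mod_add_div i m, pow_add, pow_mul, h, one_pow, mul_one]

lemma g_surj : Function.Surjective (fun t : Fin 8 × Fin 2 => ga ^ (t.1 : ℕ) * gx ^ (t.2 : ℕ)) := by
  intro g
  obtain ⟨i, j, rfl⟩ := g_form g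
  refine ⟨(⟨i % 8, Nat.mod_lt _ (by norm_num)⟩, ⟨j % 2, Nat.mod_lt _ (by norm_num)⟩), ?_⟩
  simp only
  rw [pow_mod_aux ga_pow i, pow_mod_aux gx_pow j]

instance : Finite QD16 := Finite.of_surjective _ g_surj

lemma card_le : Nat.card QD16 ≤ 16 := by
  have := Nat.card_le_card_of_surjective _ g_surj
  simpa using this

lemma exists_hom (F : Type) [Field F] {B : Type} [Ring B] [Algebra F B] (A X : B)
    (hA : A ^ 8 = 1) (hX : X ^ 2 = 1) (hr : X * A * X = A ^ 3) :
    ∃ f : MonoidAlgebra F QD16 →ₐ[F] B,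
      f (MonoidAlgebra.of F QD16 ga) = A ∧ f (MonoidAlgebra.of F QD16 gx) = X := by
  let uA : Bˣ := Units.ofPowEqOne A 8 hA (by norm_num)
  let uX : Bˣ := Units.ofPowEqOne X 2 hX (by norm_num)
  have huA : (uA : B) = A := rfl
  have huX : (uX : B) = X := rfl
  have hrel : ∀ r ∈ qdRels 4, FreeGroup.lift ![uA, uX] r = 1 := by
    intro r hr'
    simp only [qdRels, Set.mem_insert_iff, Set.mem_singleton_iff] at hr'
    rcases hr' with rfl | rfl | rfl
    · ext; simp [huA, hA]
    · ext; simp [huX, hX]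
    · rw [map_mul, map_inv, mul_inv_eq_one]
      ext; simp [huA, huX, hr]
  let φ : QD16 →* Bˣ := PresentedGroup.toGroup hrel
  refine ⟨MonoidAlgebra.lift F B QD16 ((Units.coeHom B).comp φ), ?_, ?_⟩
  · rw [MonoidAlgebra.lift_of]
    change ((PresentedGroup.toGroup hrel (PresentedGroup.of 0) : Bˣ) : B) = A
    rw [PresentedGroup.toGroup.of]; rfl
  · rw [MonoidAlgebra.lift_of]
    change ((PresentedGroup.toGroup hrel (PresentedGroup.of 1) : Bˣ) : B) = X
    rw [PresentedGroup.toGroup.of]; rfl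

lemma exists_sqrt (F : Type) [Field F] [Fintype F] (h2 : (2 : F) ≠ 0)
    (h8 : Fintype.card F % 8 = 7 ∨ Fintype.card F % 8 = 5)
    (K : Type) [Field K] [Fintype K] [Algebra F K]
    (hK : Fintype.card K = Fintype.card F ^ 2) :
    ∃ s : K, s * s = -2 ∧ ∀ k : K, ∃ r t : F, k = algebraMap F K r + algebraMap F K t * s := by
  have h2K : (2 : K) ≠ 0 := by
    intro h
    apply h2
    apply (algebraMap F K).injective
    rw [map_ofNat, map_zero]; exact h
  have hsq : IsSquare (-2 : K) := by
    rw [FiniteField.isSquare_iff (by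
      intro h
      have := ringChar.Nat.cast_ringChar (R := K)
      rw [h] at this
      exact h2K (by exact_mod_cast this)) (neg_ne_zero.mpr h2K)]
    have e : Fintype.card K / 2 = (Fintype.card F - 1) * ((Fintype.card F + 1) / 2) := by
      rw [hK]
      obtain ⟨m, hm⟩ : ∃ m, Fintype.card F = 2 * m + 1 := ⟨Fintype.card F / 2, by omega⟩
      rw [hm]
      have : (2 * m + 1) ^ 2 = 2 * (2 * m * (m + 1)) + 1 := by ring
      rw [this]
      have h3 : (2 * m + 1 + 1) / 2 = m + 1 := by omega
      rw [h3, Nat.add_sub_cancel]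
      omega
    have e2 : (-2 : K) ^ (Fintype.card F - 1) = 1 := by
      have := FiniteField.pow_card_sub_one_eq_one (-2 : F) (neg_ne_zero.mpr h2)
      have := congrArg (algebraMap F K) this
      rw [map_pow, map_neg, map_ofNat, map_one] at this
      exact this
    rw [e, pow_mul, e2, one_pow]
  obtain ⟨s, hs⟩ := hsq
  have hnot : ∀ t : F, algebraMap F K t ≠ s := by
    rintro t rfl
    have : IsSquare (-2 : F) := ⟨t, (algebraMap F K).injective (by rw [map_neg, map_ofNat, map_mul]; exact hs)⟩
    rw [FiniteField.isSquare_neg_two_iff] at this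
    omega
  refine ⟨s, hs.symm, ?_⟩
  have hinj : Function.Injective
      (fun u : F × F => algebraMap F K u.1 + algebraMap F K u.2 * s) := by
    rintro ⟨r, t⟩ ⟨r', t'⟩ h
    simp only at h
    by_cases htt : t = t'
    · subst htt
      have : r = r' := (algebraMap F K).injective (by simpa using h)
      rw [this]
    · exfalso
      have h0 : algebraMap F K (t - t') ≠ 0 := by
        exact (map_ne_zero _).mpr (sub_ne_zero.mpr htt)
      apply hnot ((r' - r) / (t - t'))
      rw [map_div₀, div_eq_iff h0]
      simp only [map_sub]
      linear_combination (-1 : K) * h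
  have hbij := (Fintype.bijective_iff_injective_and_card _).mpr ⟨hinj, by
    rw [Fintype.card_prod, hK, pow_two]⟩
  intro k
  obtain ⟨⟨r, t⟩, h⟩ := hbij.2 k
  exact ⟨r, t, h.symm⟩

end QDAux

namespace QDAux

lemma top_of_mem_K (F : Type) [Field F] (h2 : (2 : F) ≠ 0)
    (K : Type) [Field K] [Algebra F K] (s : K) (hs : s * s = -2)
    (hgen : ∀ k : K, ∃ r t : F, k = algebraMap F K r + algebraMap F K t * s)
    (R : Subalgebra F (Matrix (Fin 2) (Fin 2) K))
    (hA : !![0, 1; 1, s] ∈ R) (hX : !![1, s; 0, -1] ∈ R) (N : Matrix (Fin 2) (Fin 2) K) :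
    N ∈ R := by
  have h2K : (2 : K) ≠ 0 := by
    intro h
    apply h2
    apply (algebraMap F K).injective
    rw [map_ofNat, map_zero]; exact h
  have hi : algebraMap F K (2⁻¹) = 2⁻¹ := by rw [map_inv₀, map_ofNat]
  have hhalf : ∀ M ∈ R, (2⁻¹ : K) • M ∈ R := by
    intro M hM
    rw [← hi, algebraMap_smul]
    exact R.smul_mem hM _
  have hS : !![s, 0; 0, s] ∈ R := by
    have : !![s, 0; 0, s] = !![0, 1; 1, s] + !![0, 1; 1, s] ^ 3 := by
      ext i j
      fin_cases i <;> fin_cases j <;> simp [pow_succ] <;>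
        first | linear_combination (-1 : K) * hs | linear_combination (-s) * hs | linear_combination s * hs
    rw [this]
    exact R.add_mem hA (R.pow_mem hA _)
  have hscal : ∀ k : K, ∀ M ∈ R, k • M ∈ R := by
    intro k M hM
    obtain ⟨r, t, rfl⟩ := hgen k
    have hd : !![s, 0; 0, s] = s • (1 : Matrix (Fin 2) (Fin 2) K) := by
      ext i j
      fin_cases i <;> fin_cases j <;> simp
    have : (algebraMap F K r + algebraMap F K t * s) • M
        = r • M + t • (!![s, 0; 0, s] * M) := by
      rw [add_smul, mul_smul, algebraMap_smul, algebraMap_smul, hd, smul_mul_assoc, one_mul]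
    rw [this]
    exact R.add_mem (R.smul_mem hM _) (R.smul_mem (R.mul_mem hS hM) _)
  have hAX : !![0, -1; 1, 0] ∈ R := by
    have : !![0, -1; 1, 0] = !![0, 1; 1, s] * !![1, s; 0, -1] := by
      ext i j
      fin_cases i <;> fin_cases j <;> simp
    rw [this]
    exact R.mul_mem hA hX
  have h22 : !![0, 0; 0, 1] ∈ R := by
    have : !![0, 0; 0, 1] = (1 : Matrix (Fin 2) (Fin 2) K) - !![1, s; 0, -1]
        + (2⁻¹ : K) • s • (!![0, 1; 1, s] - !![0, -1; 1, 0]) := by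
      ext i j
      fin_cases i <;> fin_cases j <;> simp <;> field_simp <;>
        first | linear_combination (-1 : K) * hs | linear_combination hs | ring
    rw [this]
    exact R.add_mem (R.sub_mem R.one_mem hX) (hhalf _ (hscal _ _ (R.sub_mem hA hAX)))
  have h11 : !![1, 0; 0, 0] ∈ R := by
    have : !![1, 0; 0, 0] = (1 : Matrix (Fin 2) (Fin 2) K) - !![0, 0; 0, 1] := by
      ext i j
      fin_cases i <;> fin_cases j <;> simp
    rw [this]
    exact R.sub_mem R.one_mem h22
  have h12 : !![0, 1; 0, 0] ∈ R := by
    have : !![0, 1; 0, 0] = (2⁻¹ : K) • (!![0, 1; 1, s] - !![0, -1; 1, 0] - s • !![0, 0; 0, 1]) := by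
      ext i j
      fin_cases i <;> fin_cases j <;> simp <;> field_simp <;> norm_num
    rw [this]
    exact hhalf _ (R.sub_mem (R.sub_mem hA hAX) (hscal _ _ h22))
  have h21 : !![0, 0; 1, 0] ∈ R := by
    have : (!![0, 0; 1, 0] : Matrix (Fin 2) (Fin 2) K) = !![0, -1; 1, 0] + !![0, 1; 0, 0] := by
      ext i j
      fin_cases i <;> fin_cases j <;> simp
    rw [this]
    exact R.add_mem hAX h12
  have : N = N 0 0 • !![1, 0; 0, 0] + N 0 1 • !![0, 1; 0, 0]
      + N 1 0 • !![0, 0; 1, 0] + N 1 1 • !![0, 0; 0, 1] := by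
    ext i j
    fin_cases i <;> fin_cases j <;> simp
  rw [this]
  exact R.add_mem (R.add_mem (R.add_mem (hscal _ _ h11) (hscal _ _ h12)) (hscal _ _ h21))
    (hscal _ _ h22)

lemma top_of_mem_F (F : Type) [Field F] (h2 : (2 : F) ≠ 0)
    (R : Subalgebra F (Matrix (Fin 2) (Fin 2) F))
    (hA : !![0, -1; 1, 0] ∈ R) (hX : !![1, 0; 0, -1] ∈ R) (N : Matrix (Fin 2) (Fin 2) F) :
    N ∈ R := by
  have : N = ((N 0 0 + N 1 1) / 2) • (1 : Matrix (Fin 2) (Fin 2) F)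
      + ((N 0 0 - N 1 1) / 2) • !![1, 0; 0, -1]
      + ((N 1 0 - N 0 1) / 2) • !![0, -1; 1, 0]
      + ((N 1 0 + N 0 1) / 2) • (!![0, -1; 1, 0] * !![1, 0; 0, -1]) := by
    ext i j
    fin_cases i <;> fin_cases j <;> simp <;> field_simp <;> ring
  rw [this]
  exact R.add_mem (R.add_mem (R.add_mem (R.smul_mem R.one_mem _) (R.smul_mem hX _))
    (R.smul_mem hA _)) (R.smul_mem (R.mul_mem hA hX) _)

lemma exists_algEquiv (F : Type) [Field F] [Fintype F] (h2 : (2 : F) ≠ 0)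
    (h8 : Fintype.card F % 8 = 7 ∨ Fintype.card F % 8 = 5)
    (K : Type) [Field K] [Fintype K] [Algebra F K]
    (hK : Fintype.card K = Fintype.card F ^ 2) :
    Nonempty (MonoidAlgebra F QD16 ≃ₐ[F]
      (F × F × F × F × Matrix (Fin 2) (Fin 2) F × Matrix (Fin 2) (Fin 2) K)) := by
  obtain ⟨s, hs, hgen⟩ := exists_sqrt F h2 h8 K hK
  obtain ⟨f1, f1a, f1x⟩ := exists_hom F (1 : F) 1 (by norm_num) (by norm_num) (by norm_num)
  obtain ⟨f2, f2a, f2x⟩ := exists_hom F (1 : F) (-1) (by norm_num) (by norm_num) (by norm_num)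
  obtain ⟨f3, f3a, f3x⟩ := exists_hom F (-1 : F) 1 (by norm_num) (by norm_num) (by norm_num)
  obtain ⟨f4, f4a, f4x⟩ := exists_hom F (-1 : F) (-1) (by norm_num) (by norm_num) (by norm_num)
  have q2 : (!![0, -1; 1, 0] : Matrix (Fin 2) (Fin 2) F) ^ 2 = -1 := by
    ext i j
    fin_cases i <;> fin_cases j <;> simp [pow_two]
  obtain ⟨f5, f5a, f5x⟩ := exists_hom F (!![0, -1; 1, 0] : Matrix (Fin 2) (Fin 2) F) !![1, 0; 0, -1]
    (by rw [show 8 = 2 * 4 from rfl, pow_mul, q2]; norm_num)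
    (by ext i j; fin_cases i <;> fin_cases j <;> simp [pow_two])
    (by rw [pow_succ, q2]; ext i j; fin_cases i <;> fin_cases j <;> simp)
  have k2 : (!![0, 1; 1, s] : Matrix (Fin 2) (Fin 2) K) ^ 2 = !![1, s; s, -1] := by
    ext i j
    fin_cases i <;> fin_cases j <;> simp [pow_two]
    linear_combination hs
  have k4 : (!![0, 1; 1, s] : Matrix (Fin 2) (Fin 2) K) ^ 4 = -1 := by
    rw [show 4 = 2 * 2 from rfl, pow_mul, k2]
    ext i j
    fin_cases i <;> fin_cases j <;> simp [pow_two] <;> linear_combination hs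
  obtain ⟨f6, f6a, f6x⟩ := exists_hom F (!![0, 1; 1, s] : Matrix (Fin 2) (Fin 2) K) !![1, s; 0, -1]
    (by rw [show 8 = 4 * 2 from rfl, pow_mul, k4]; norm_num)
    (by ext i j; fin_cases i <;> fin_cases j <;> simp [pow_two])
    (by
      rw [pow_succ, k2]
      ext i j
      fin_cases i <;> fin_cases j <;> simp <;> linear_combination (-1 : K) * hs)
  have f5s : Function.Surjective f5 := fun N =>
    top_of_mem_F F h2 f5.range ⟨_, f5a⟩ ⟨_, f5x⟩ N
  have f6s : Function.Surjective f6 := fun N =>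
    top_of_mem_K F h2 K s hs hgen f6.range ⟨_, f6a⟩ ⟨_, f6x⟩ N
  set α := MonoidAlgebra.of F QD16 ga
  set ξ := MonoidAlgebra.of F QD16 gx
  let Φ : MonoidAlgebra F QD16 →ₐ[F]
      (F × F × F × F × Matrix (Fin 2) (Fin 2) F × Matrix (Fin 2) (Fin 2) K) :=
    f1.prod (f2.prod (f3.prod (f4.prod (f5.prod f6))))
  have q4 : (!![0, -1; 1, 0] : Matrix (Fin 2) (Fin 2) F) ^ 4 = 1 := by
    rw [show 4 = 2 * 2 from rfl, pow_mul, q2]; norm_num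
  have hsurj : Function.Surjective Φ := by
    rintro ⟨u1, u2, u3, u4, M, N⟩
    obtain ⟨m, rfl⟩ := f5s M
    obtain ⟨n, rfl⟩ := f6s N
    refine ⟨(u1 / 16) • ((1 + α ^ 4) * (1 + α ^ 2) * (1 + α) * (1 + ξ))
      + (u2 / 16) • ((1 + α ^ 4) * (1 + α ^ 2) * (1 + α) * (1 - ξ))
      + (u3 / 16) • ((1 + α ^ 4) * (1 + α ^ 2) * (1 - α) * (1 + ξ))
      + (u4 / 16) • ((1 + α ^ 4) * (1 + α ^ 2) * (1 - α) * (1 - ξ))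
      + (1 / 4 : F) • ((1 + α ^ 4) * (1 - α ^ 2) * m)
      + (1 / 2 : F) • ((1 - α ^ 4) * n), ?_⟩
    have h16 : (16 : F) ≠ 0 := by
      rw [show (16 : F) = 2 ^ 4 by norm_num]; exact pow_ne_zero _ h2
    have h4 : (4 : F) ≠ 0 := by
      rw [show (4 : F) = 2 ^ 2 by norm_num]; exact pow_ne_zero _ h2
    refine Prod.ext ?_ (Prod.ext ?_ (Prod.ext ?_ (Prod.ext ?_ (Prod.ext ?_ ?_))))
    · change f1 _ = u1
      simp [f1a, f1x]; field_simp; ring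
    · change f2 _ = u2
      simp [f2a, f2x]; field_simp; ring
    · change f3 _ = u3
      simp [f3a, f3x]; field_simp; ring
    · change f4 _ = u4
      simp [f4a, f4x]; field_simp; ring
    · change f5 _ = f5 m
      simp only [map_add, map_sub, map_mul, map_pow, map_one, map_smul, f5a, f5x, q2, q4]
      have e : (1 + 1 : Matrix (Fin 2) (Fin 2) F) * (1 - -1) * f5 m = (4 : F) • f5 m := by
        rw [show (4 : F) • f5 m = (4 : Matrix (Fin 2) (Fin 2) F) * f5 m by
          rw [Algebra.smul_def, map_ofNat]]
        congr 1; norm_num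
      rw [e]
      simp [smul_smul, h4]
    · change f6 _ = f6 n
      simp only [map_add, map_sub, map_mul, map_pow, map_one, map_smul, f6a, f6x, k4]
      have e : (1 - -1 : Matrix (Fin 2) (Fin 2) K) * f6 n = (2 : F) • f6 n := by
        rw [show (2 : F) • f6 n = (2 : Matrix (Fin 2) (Fin 2) K) * f6 n by
          rw [Algebra.smul_def, map_ofNat]]
        congr 1; norm_num
      rw [e]
      simp [smul_smul, h2]
  have : Fintype QD16 := Fintype.ofFinite _
  have hfin : Module.finrank F (MonoidAlgebra F QD16) ≤ 16 := by
    have h : Module.finrank F (MonoidAlgebra F QD16) = Fintype.card QD16 :=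
      Module.finrank_eq_card_basis (MonoidAlgebra.basis QD16 F)
    rw [h, ← Nat.card_eq_fintype_card]
    exact card_le
  have hFK : Module.finrank F K = 2 := by
    have := Module.card_eq_pow_finrank (K := F) (V := K)
    rw [hK] at this
    exact (Nat.pow_right_injective (Fintype.one_lt_card (α := F)) this).symm
  have hT : Module.finrank F
      (F × F × F × F × Matrix (Fin 2) (Fin 2) F × Matrix (Fin 2) (Fin 2) K) = 16 := by
    simp [Module.finrank_prod, Module.finrank_matrix, hFK]
  have : Module.Finite F (MonoidAlgebra F QD16) :=
    Module.Finite.of_basis (MonoidAlgebra.basis QD16 F)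
  have heq : Module.finrank F (MonoidAlgebra F QD16) = Module.finrank F
      (F × F × F × F × Matrix (Fin 2) (Fin 2) F × Matrix (Fin 2) (Fin 2) K) := by
    apply le_antisymm
    · rw [hT]; exact hfin
    · exact LinearMap.finrank_le_finrank_of_surjective (f := Φ.toLinearMap) hsurj
  have hinj : Function.Injective Φ :=
    (LinearMap.injective_iff_surjective_of_finrank_eq_finrank (f := Φ.toLinearMap) heq).mpr hsurj
  exact ⟨AlgEquiv.ofBijective Φ ⟨hinj, hsurj⟩⟩

end QDAux

/-- For `q ≡ -1, -3 (mod 8)` (i.e. `q % 8 = 7` or `q % 8 = 5`),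
`U(F_q[QD_16]) ≅ C_{q-1}⁴ × GL(2,F_q) × GL(2,F_{q²})`. -/
theorem unitGroup_QD16_neg_one_three (F : Type) [Field F] [Fintype F]
    (p n : ℕ) [Fact p.Prime] (hp : Odd p) [CharP F p]
    (hn : 0 < n) (hq : Fintype.card F = p ^ n)
    (h8 : Fintype.card F % 8 = 7 ∨ Fintype.card F % 8 = 5)
    (K : Type) [Field K] [Fintype K] [Algebra F K]
    (hK : Fintype.card K = Fintype.card F ^ 2) :
    Nonempty ((MonoidAlgebra F QD16)ˣ ≃*
      (Multiplicative (ZMod (Fintype.card F - 1)) ×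
       Multiplicative (ZMod (Fintype.card F - 1)) ×
       Multiplicative (ZMod (Fintype.card F - 1)) ×
       Multiplicative (ZMod (Fintype.card F - 1)) ×
       Matrix.GeneralLinearGroup (Fin 2) F ×
       Matrix.GeneralLinearGroup (Fin 2) K)) := by
  have h2 : (2 : F) ≠ 0 := by
    intro h
    have h' : ((2 : ℕ) : F) = 0 := by exact_mod_cast h
    rw [CharP.cast_eq_zero_iff F p] at h'
    have := (Nat.prime_dvd_prime_iff_eq (Fact.out : p.Prime) Nat.prime_two).mp h'
    subst this
    exact absurd hp (by decide)
  obtain ⟨e⟩ := QDAux.exists_algEquiv F h2 h8 K hK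
  have hc : Nat.card Fˣ = Fintype.card F - 1 := by
    rw [Nat.card_units, Nat.card_eq_fintype_card]
  have c : Fˣ ≃* Multiplicative (ZMod (Fintype.card F - 1)) := by
    rw [← hc]
    exact (zmodCyclicMulEquiv inferInstance).symm
  refine ⟨(Units.mapEquiv e.toMulEquiv).trans ?_⟩
  refine MulEquiv.prodUnits.trans (MulEquiv.prodCongr c ?_)
  refine MulEquiv.prodUnits.trans (MulEquiv.prodCongr c ?_)
  refine MulEquiv.prodUnits.trans (MulEquiv.prodCongr c ?_)
  refine MulEquiv.prodUnits.trans (MulEquiv.prodCongr c ?_)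
  exact MulEquiv.prodUnits
end

section
/- Let F_q be a finite field of odd characteristic p with q = p^n elements. If q ≡ 1 (mod 16) or q ≡ 7 (mod 16), then the group algebra F_q[QD_32] is isomorphic as an F_q-algebra to F_q ⊕ F_q ⊕ F_q ⊕ F_q ⊕ M(2,F_q)^7, the direct sum of four copies of F_q and seven copies of the 2 × 2 matrix algebra over F_q. -/
/-- The quasidihedral group of order 32: `⟨a, x | a^16 = x^2 = 1, x a x = a^7⟩`. -/
def QD32 : Type := PresentedGroup (qdRels 5)

instance : Group QD32 := inferInstanceAs (Group (PresentedGroup (qdRels 5)))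


namespace QD32

/-- The generator `a`. -/
def ga : QD32 := (PresentedGroup.of 0 : PresentedGroup (qdRels 5))

/-- The generator `x`. -/
def gx : QD32 := (PresentedGroup.of 1 : PresentedGroup (qdRels 5))

lemma ga_pow : ga ^ 16 = 1 := by
  have h : (FreeGroup.of 0 ^ (2 ^ (5 - 1)) : FreeGroup (Fin 2)) ∈ qdRels 5 := by simp [qdRels]
  exact PresentedGroup.one_of_mem h

lemma gx_pow : gx ^ 2 = 1 := by
  have h : (FreeGroup.of 1 ^ 2 : FreeGroup (Fin 2)) ∈ qdRels 5 := by simp [qdRels]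
  exact PresentedGroup.one_of_mem h

lemma gx_ga : gx * ga * gx = ga ^ 7 := by
  have h : (FreeGroup.of 1 * FreeGroup.of 0 * FreeGroup.of 1 *
    (FreeGroup.of 0 ^ (2 ^ (5 - 2) - 1))⁻¹ : FreeGroup (Fin 2)) ∈ qdRels 5 := by simp [qdRels]
  exact mul_inv_eq_one.mp (PresentedGroup.one_of_mem h)

lemma gx_mul_pow (k : ℕ) : gx * ga ^ k = ga ^ (7 * k) * gx := by
  have hx : gx * gx = 1 := by rw [← pow_two, gx_pow]
  have h1 : gx * ga = ga ^ 7 * gx := by rw [← gx_ga, mul_assoc _ gx gx, hx, mul_one]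
  induction k with
  | zero => simp
  | succ k ih =>
    rw [pow_succ, ← mul_assoc, ih, mul_assoc, h1, ← mul_assoc, ← pow_add]
    rfl

lemma gx_pow_mul_pow (j k : ℕ) : gx ^ j * ga ^ k = ga ^ (7 ^ j * k) * gx ^ j := by
  induction j with
  | zero => simp
  | succ j ih =>
    rw [pow_succ', mul_assoc, ih, ← mul_assoc, gx_mul_pow, mul_assoc, ← mul_assoc 7, ← pow_succ']

lemma exists_form (g : QD32) : ∃ i j : ℕ, g = ga ^ i * gx ^ j := by
  have hg : g ∈ Subgroup.closure (Set.range
      (PresentedGroup.of : Fin 2 → PresentedGroup (qdRels 5))) := by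
    rw [PresentedGroup.closure_range_of]; exact Subgroup.mem_top _
  induction hg using Subgroup.closure_induction with
  | mem y hy =>
    obtain ⟨k, rfl⟩ := hy
    fin_cases k
    · exact ⟨1, 0, by simp; rfl⟩
    · exact ⟨0, 1, by simp; rfl⟩
  | one => exact ⟨0, 0, by simp; rfl⟩
  | mul y z _ _ hy hz =>
    obtain ⟨i, j, rfl⟩ := hy
    obtain ⟨k, l, rfl⟩ := hz
    refine ⟨i + 7 ^ j * k, j + l, ?_⟩
    change (ga ^ i * gx ^ j) * (ga ^ k * gx ^ l) = _
    rw [mul_assoc, ← mul_assoc (gx ^ j), gx_pow_mul_pow, pow_add, pow_add]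
    simp only [mul_assoc]
  | inv y _ hy =>
    obtain ⟨i, j, rfl⟩ := hy
    refine ⟨7 ^ j * (15 * i), j, ?_⟩
    rw [← gx_pow_mul_pow]
    change (ga ^ i * gx ^ j)⁻¹ = _
    rw [inv_eq_iff_mul_eq_one]
    have hx : gx ^ j * gx ^ j = 1 := by rw [← pow_add, ← two_mul, pow_mul, gx_pow, one_pow]
    rw [mul_assoc, ← mul_assoc (gx ^ j), hx, one_mul, ← pow_add,
      show i + 15 * i = 16 * i by ring, pow_mul, ga_pow, one_pow]

lemma form_surj : Function.Surjective
    (fun ij : Fin 16 × Fin 2 => ga ^ (ij.1 : ℕ) * gx ^ (ij.2 : ℕ)) := by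
  intro g
  obtain ⟨i, j, rfl⟩ := exists_form g
  refine ⟨(⟨i % 16, Nat.mod_lt _ (by norm_num)⟩, ⟨j % 2, Nat.mod_lt _ (by norm_num)⟩), ?_⟩
  change ga ^ (i % 16) * gx ^ (j % 2) = _
  rw [← pow_eq_pow_mod i ga_pow, ← pow_eq_pow_mod j gx_pow]

instance : Finite QD32 := Finite.of_surjective _ form_surj

lemma card_le : Nat.card QD32 ≤ 32 := by
  have := Nat.card_le_card_of_surjective _ form_surj
  simpa using this

variable {F : Type} [Field F]

lemma exists_hom {A : Type} [Ring A] [Algebra F A] (a x : A) (ha : a ^ 16 = 1) (hx : x ^ 2 = 1)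
    (hxa : x * a * x = a ^ 7) :
    ∃ f : MonoidAlgebra F QD32 →ₐ[F] A,
      f (MonoidAlgebra.of F QD32 ga) = a ∧ f (MonoidAlgebra.of F QD32 gx) = x := by
  let ua : Aˣ := Units.ofPowEqOne a 16 ha (by norm_num)
  let ux : Aˣ := Units.ofPowEqOne x 2 hx (by norm_num)
  let g : PresentedGroup (qdRels 5) →* Aˣ := PresentedGroup.toGroup (f := ![ua, ux]) (by
    intro r hr
    simp only [qdRels, Set.mem_insert_iff, Set.mem_singleton_iff] at hr
    rcases hr with rfl | rfl | rfl
    · ext; simp [ua]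
    · ext; simp [ux]
    · simp only [map_mul, map_inv, map_pow, FreeGroup.lift_apply_of, mul_inv_eq_one]
      ext; simp [ua, ux, hxa])
  let h : QD32 →* A := (Units.coeHom A).comp g
  refine ⟨MonoidAlgebra.lift F A QD32 h, ?_, ?_⟩
  · rw [MonoidAlgebra.lift_of]
    change ((g (PresentedGroup.of 0) : Aˣ) : A) = a
    rw [PresentedGroup.toGroup.of]; rfl
  · rw [MonoidAlgebra.lift_of]
    change ((g (PresentedGroup.of 1) : Aˣ) : A) = x
    rw [PresentedGroup.toGroup.of]; rfl

/-- Separation of two algebra homomorphisms. -/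
def Sep {C A B : Type} [Ring C] [Ring A] [Ring B] [Algebra F C] [Algebra F A] [Algebra F B]
    (f : C →ₐ[F] A) (g : C →ₐ[F] B) : Prop := ∃ e, f e = 1 ∧ g e = 0

section
variable {C A B D : Type} [Ring C] [Ring A] [Ring B] [Ring D] [Algebra F C] [Algebra F A]
  [Algebra F B] [Algebra F D]

lemma Sep.prod {f : C →ₐ[F] A} {g : C →ₐ[F] B} {h : C →ₐ[F] D} (h1 : Sep f g) (h2 : Sep f h) :
    Sep f (g.prod h) := by
  obtain ⟨e, he, he'⟩ := h1
  obtain ⟨k, hk, hk'⟩ := h2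
  exact ⟨e * k, by simp [he, hk], by simp [he', hk']⟩

lemma Sep.surj {f : C →ₐ[F] A} {g : C →ₐ[F] B} (h : Sep f g) (hf : Function.Surjective f)
    (hg : Function.Surjective g) : Function.Surjective (f.prod g) := by
  rintro ⟨y, z⟩
  obtain ⟨e, he, he'⟩ := h
  obtain ⟨y, rfl⟩ := hf y
  obtain ⟨z, rfl⟩ := hg z
  exact ⟨e * y + (1 - e) * z, by simp [he, he']⟩

lemma Sep.of_scalar {f : C →ₐ[F] A} {g : C →ₐ[F] B} (w : C) (α β : F)
    (hf : f w = algebraMap F A α) (hg : g w = algebraMap F B β) (h : α ≠ β) : Sep f g := by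
  have h' : α - β ≠ 0 := sub_ne_zero.mpr h
  refine ⟨algebraMap F C (α - β)⁻¹ * (w - algebraMap F C β), ?_, ?_⟩
  · simp only [map_mul, map_sub, AlgHom.commutes, hf]
    rw [← map_sub, ← map_mul, inv_mul_cancel₀ h', map_one]
  · simp [hg]

end

/-- The type of homomorphisms under consideration: `c = a + a^7` acts as `t`, `a^8` acts as `d`. -/
def Typ {A : Type} [Ring A] [Algebra F A] (f : MonoidAlgebra F QD32 →ₐ[F] A) (t d : F) : Prop :=
  f (MonoidAlgebra.of F QD32 ga + MonoidAlgebra.of F QD32 ga ^ 7) = algebraMap F A t ∧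
  f (MonoidAlgebra.of F QD32 ga ^ 8) = algebraMap F A d

lemma Typ.sep {A B : Type} [Ring A] [Algebra F A] [Ring B] [Algebra F B]
    {f : MonoidAlgebra F QD32 →ₐ[F] A} {g : MonoidAlgebra F QD32 →ₐ[F] B} {t d t' d' : F}
    (hf : Typ f t d) (hg : Typ g t' d') (h : d = d' → t ≠ t') : Sep f g := by
  by_cases hd : d = d'
  · exact Sep.of_scalar _ _ _ hf.1 hg.1 (h hd)
  · exact Sep.of_scalar _ _ _ hf.2 hg.2 hd

lemma exists_two (h2 : (2 : F) ≠ 0) (t d : F)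
    (H : (d = -1 ∧ t ^ 4 + 4 * t ^ 2 + 2 = 0) ∨ (d = 1 ∧ t * (t ^ 2 - 2) = 0)) :
    ∃ f : MonoidAlgebra F QD32 →ₐ[F] Matrix (Fin 2) (Fin 2) F,
      Typ f t d ∧ Function.Surjective f := by
  have hD : t ^ 2 - 4 * d ≠ 0 := by
    rcases H with ⟨rfl, H⟩ | ⟨rfl, H⟩
    · intro h; apply h2; linear_combination H - t ^ 2 * h
    · rcases mul_eq_zero.mp H with h | h
      · intro h'; apply h2
        have : (2 : F) * 2 = 0 := by subst h; linear_combination -h'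
        simpa using this
      · intro h'; apply h2; linear_combination h - h'
  have ha2 : (!![0, -d; 1, t] : Matrix (Fin 2) (Fin 2) F) ^ 2 =
      !![-d, -d * t; t, t ^ 2 - d] := by
    rw [pow_two, Matrix.mul_fin_two]; congr! 3 <;> grind
  have ha4 : (!![0, -d; 1, t] : Matrix (Fin 2) (Fin 2) F) ^ 4 =
      !![d ^ 2 - d * t ^ 2, 2 * d ^ 2 * t - d * t ^ 3; t ^ 3 - 2 * d * t,
        t ^ 4 - 3 * d * t ^ 2 + d ^ 2] := by
    rw [show 4 = 2 * 2 by rfl, pow_mul, ha2, pow_two, Matrix.mul_fin_two]; congr! 3 <;> grind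
  have ha7 : (!![0, -d; 1, t] : Matrix (Fin 2) (Fin 2) F) ^ 7 = !![t, d; -1, 0] := by
    rw [show 7 = 4 + 2 + 1 by rfl, pow_add, pow_add, pow_one, ha4, ha2, Matrix.mul_fin_two,
      Matrix.mul_fin_two]
    rcases H with ⟨rfl, H⟩ | ⟨rfl, H⟩
    · congr! 3 <;> grind
    · congr! 3 <;> grind
  have hd2 : d ^ 2 = 1 := by rcases H with ⟨rfl, H⟩ | ⟨rfl, H⟩ <;> ring
  have ha8 : (!![0, -d; 1, t] : Matrix (Fin 2) (Fin 2) F) ^ 8 = algebraMap F _ d := by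
    rw [pow_succ, ha7, Matrix.mul_fin_two]
    ext i j; fin_cases i <;> fin_cases j <;> simp [Matrix.algebraMap_matrix_apply] <;> ring
  obtain ⟨f, fa, fx⟩ := exists_hom (F := F) (!![0, -d; 1, t] : Matrix (Fin 2) (Fin 2) F)
    !![1, t; 0, -1]
    (by rw [show 16 = 8 * 2 by rfl, pow_mul, ha8, ← map_pow, hd2, map_one])
    (by rw [pow_two, Matrix.mul_fin_two, Matrix.one_fin_two]; simp)
    (by rw [ha7, Matrix.mul_fin_two, Matrix.mul_fin_two]; simp)
  refine ⟨f, ⟨?_, ?_⟩, ?_⟩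
  · rw [map_add, map_pow, fa, ha7]
    ext i j; fin_cases i <;> fin_cases j <;> simp [Matrix.algebraMap_matrix_apply]
  · rw [map_pow, fa, ha8]
  · intro M
    obtain ⟨β, hβ⟩ : ∃ β, β * (t ^ 2 - 4 * d) =
      t * (M 1 1 - M 0 0) + 2 * (M 0 1 - d * M 1 0) := ⟨_ / _, div_mul_cancel₀ _ hD⟩
    obtain ⟨γ, hγ⟩ : ∃ γ, γ * (t ^ 2 - 4 * d) =
      t * (M 0 1 - d * M 1 0) + 2 * d * (M 1 1 - M 0 0) := ⟨_ / _, div_mul_cancel₀ _ hD⟩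
    have e1 : t * β - 2 * γ = M 1 1 - M 0 0 := by
      apply mul_right_cancel₀ hD; linear_combination t * hβ - 2 * hγ
    have e2 : -2 * d * β + t * γ = M 0 1 - d * M 1 0 := by
      apply mul_right_cancel₀ hD; linear_combination -2 * d * hβ + t * hγ
    refine ⟨(M 0 0 - γ) • 1 + β • MonoidAlgebra.of F QD32 ga + γ • MonoidAlgebra.of F QD32 gx
      + (M 1 0 - β) • (MonoidAlgebra.of F QD32 ga * MonoidAlgebra.of F QD32 gx), ?_⟩
    rw [map_add, map_add, map_add, map_smul, map_smul, map_smul, map_smul, map_mul, fa, fx, map_one]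
    ext i j; fin_cases i <;> fin_cases j <;> simp
    · linear_combination e2
    · linear_combination e1

lemma exists_one (α ξ : F) (hα : α ^ 2 = 1) (hξ : ξ ^ 2 = 1) :
    ∃ f : MonoidAlgebra F QD32 →ₐ[F] F,
      Typ f (2 * α) 1 ∧ f (MonoidAlgebra.of F QD32 gx) = ξ ∧ Function.Surjective f := by
  have h8 : α ^ 8 = 1 := by rw [show 8 = 2 * 4 by rfl, pow_mul, hα, one_pow]
  have h7 : α ^ 7 = α := by
    rw [show 7 = 2 * 3 + 1 by rfl, pow_succ, pow_mul, hα, one_pow, one_mul]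
  obtain ⟨f, fa, fx⟩ := exists_hom (F := F) α ξ
    (by rw [show 16 = 8 * 2 by rfl, pow_mul, h8, one_pow]) hξ
    (by rw [h7]; linear_combination α * hξ)
  refine ⟨f, ⟨?_, ?_⟩, fx, fun y => ⟨algebraMap F _ y, by rw [AlgHom.commutes]; rfl⟩⟩
  · rw [map_add, map_pow, fa, h7]; simp; ring
  · rw [map_pow, fa, h8, map_one]

lemma exists_s [Fintype F] (p n : ℕ) [Fact p.Prime] [CharP F p]
    (hq : Fintype.card F = p ^ n)
    (h16 : Fintype.card F % 16 = 1 ∨ Fintype.card F % 16 = 7) :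
    ∃ s : F, s ^ 4 + 4 * s ^ 2 + 2 = 0 := by
  obtain ⟨K, _, _, _⟩ : ∃ (K : Type) (_ : Field K) (_ : Algebra F K), IsAlgClosed K :=
    ⟨AlgebraicClosure F, inferInstance, inferInstance, inferInstance⟩
  have : CharP K p := charP_of_injective_algebraMap (algebraMap F K).injective p
  obtain ⟨z, hz⟩ := IsAlgClosed.exists_pow_nat_eq (-1 : K) (n := 8) (by norm_num)
  have hz16 : z ^ 16 = 1 := by rw [show 16 = 8 * 2 by rfl, pow_mul, hz]; norm_num
  have hs : (z + z ^ 7) ^ Fintype.card F = z + z ^ 7 := by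
    have e : (z + z ^ 7) ^ Fintype.card F = z ^ Fintype.card F + (z ^ Fintype.card F) ^ 7 := by
      rw [hq, add_pow_char_pow, ← pow_mul, ← pow_mul, mul_comm]
    rw [e, pow_eq_pow_mod _ hz16]
    rcases h16 with h | h <;> rw [h]
    · simp
    · linear_combination (z ^ 33 + z ^ 17 + z) * hz16
  have hsp : (Polynomial.X ^ Fintype.card F - Polynomial.X : Polynomial F).Splits := by
    rw [Polynomial.splits_iff_card_roots, FiniteField.roots_X_pow_card_sub_X,
      FiniteField.X_pow_card_sub_X_natDegree_eq F Fintype.one_lt_card]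
    rfl
  obtain ⟨s, hs'⟩ : ∃ s : F, algebraMap F K s = z + z ^ 7 :=
    hsp.mem_range_of_isRoot (i := algebraMap F K)
      (FiniteField.X_pow_card_sub_X_ne_zero F Fintype.one_lt_card) (by simp [hs])
  refine ⟨s, (algebraMap F K).injective ?_⟩
  simp only [map_add, map_mul, map_pow, map_zero, map_ofNat, hs']
  clear hs' hs hsp
  grind

end QD32

theorem groupAlgebra_QD32_wedderburn_one_seven (F : Type) [Field F] [Fintype F]
    (p n : ℕ) [Fact p.Prime] (hp : Odd p) [CharP F p]
    (hn : 0 < n) (hq : Fintype.card F = p ^ n)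
    (h16 : Fintype.card F % 16 = 1 ∨ Fintype.card F % 16 = 7) :
    Nonempty (MonoidAlgebra F QD32 ≃ₐ[F]
      (F × F × F × F ×
        Matrix (Fin 2) (Fin 2) F × Matrix (Fin 2) (Fin 2) F × Matrix (Fin 2) (Fin 2) F ×
        Matrix (Fin 2) (Fin 2) F × Matrix (Fin 2) (Fin 2) F × Matrix (Fin 2) (Fin 2) F ×
        Matrix (Fin 2) (Fin 2) F)) := by
  classical
  have h2 : (2 : F) ≠ 0 := by
    intro h
    have h' : ((2 : ℕ) : F) = 0 := by exact_mod_cast h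
    rw [CharP.cast_eq_zero_iff F p] at h'
    have := (Nat.prime_dvd_prime_iff_eq (Fact.out : p.Prime) Nat.prime_two).mp h'
    subst this
    exact absurd hp (by decide)
  obtain ⟨s, hs⟩ := QD32.exists_s (F := F) p n hq h16
  obtain ⟨r, hr⟩ : ∃ r, r = s ^ 2 + 2 := ⟨_, rfl⟩
  have hr2 : r ^ 2 = 2 := by subst hr; linear_combination hs
  have hr0 : r ≠ 0 := by rintro rfl; apply h2; linear_combination -hr2
  have hs0 : s ≠ 0 := by rintro rfl; apply h2; linear_combination hs
  obtain ⟨u, hu⟩ : ∃ u, u * s = -r := ⟨-r / s, div_mul_cancel₀ _ hs0⟩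
  have hu2 : u ^ 2 = -r - 2 := by
    apply mul_right_cancel₀ (pow_ne_zero 2 hs0)
    linear_combination (u * s - r) * hu + (r + 2) * hr.symm + 2 * hr2
  have hu4 : u ^ 4 + 4 * u ^ 2 + 2 = 0 := by
    linear_combination (u ^ 2 - r - 2 + 4) * hu2 + hr2
  have hu0 : u ≠ 0 := by rintro rfl; apply hr0; linear_combination hu
  have hsu : s ≠ u := by
    rintro rfl; apply mul_ne_zero h2 hr0; linear_combination hr + hu2
  have hsu' : s ≠ -u := by
    rintro rfl; apply mul_ne_zero h2 hr0; linear_combination hr + hu2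
  have hneg : ∀ y : F, y ≠ 0 → y ≠ -y := by
    intro y hy h; apply mul_ne_zero h2 hy; linear_combination h
  obtain ⟨f1, t1, x1, s1⟩ := QD32.exists_one (F := F) 1 1 (by ring) (by ring)
  obtain ⟨f2, t2, x2, s2⟩ := QD32.exists_one (F := F) 1 (-1) (by ring) (by ring)
  obtain ⟨f3, t3, x3, s3⟩ := QD32.exists_one (F := F) (-1) 1 (by ring) (by ring)
  obtain ⟨f4, t4, x4, s4⟩ := QD32.exists_one (F := F) (-1) (-1) (by ring) (by ring)
  obtain ⟨g1, v1, w1⟩ := QD32.exists_two h2 0 1 (Or.inr ⟨rfl, by ring⟩)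
  obtain ⟨g2, v2, w2⟩ := QD32.exists_two h2 r 1 (Or.inr ⟨rfl, by rw [hr2]; ring⟩)
  obtain ⟨g3, v3, w3⟩ := QD32.exists_two h2 (-r) 1 (Or.inr ⟨rfl, by rw [neg_sq, hr2]; ring⟩)
  obtain ⟨g4, v4, w4⟩ := QD32.exists_two h2 s (-1) (Or.inl ⟨rfl, hs⟩)
  obtain ⟨g5, v5, w5⟩ := QD32.exists_two h2 (-s) (-1) (Or.inl ⟨rfl, by linear_combination hs⟩)
  obtain ⟨g6, v6, w6⟩ := QD32.exists_two h2 u (-1) (Or.inl ⟨rfl, hu4⟩)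
  obtain ⟨g7, v7, w7⟩ := QD32.exists_two h2 (-u) (-1) (Or.inl ⟨rfl, by linear_combination hu4⟩)
  have h1 : (1 : F) ≠ -1 := hneg 1 one_ne_zero
  have n2 : (2 : F) ≠ -2 := hneg 2 h2
  have r2 : (2 : F) ≠ r := by
    intro h; apply h2; linear_combination (2 + r) * h + hr2
  have r2' : (2 : F) ≠ -r := by
    intro h; apply h2; linear_combination (2 - r) * h + hr2
  have r2'' : (-2 : F) ≠ r := fun h => r2' (by rw [← h, neg_neg])
  have h12 : QD32.Sep f1 f2 := QD32.Sep.of_scalar _ _ _ x1 x2 h1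
  have h34 : QD32.Sep f3 f4 := QD32.Sep.of_scalar _ _ _ x3 x4 h1
  have S : Function.Surjective (f1.prod (f2.prod (f3.prod (f4.prod (g1.prod (g2.prod
      (g3.prod (g4.prod (g5.prod (g6.prod g7)))))))))) := by
    refine QD32.Sep.surj ?_ s1 (QD32.Sep.surj ?_ s2 (QD32.Sep.surj ?_ s3 (QD32.Sep.surj ?_ s4
      (QD32.Sep.surj ?_ w1 (QD32.Sep.surj ?_ w2 (QD32.Sep.surj ?_ w3 (QD32.Sep.surj ?_ w4
      (QD32.Sep.surj ?_ w5 (QD32.Sep.surj ?_ w6 w7)))))))))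
    all_goals repeat' apply QD32.Sep.prod
    all_goals first
      | exact h12
      | exact h34
      | (apply QD32.Typ.sep <;> first | assumption | grind)
  have hfin : Module.finrank F (MonoidAlgebra F QD32) ≤ 32 := by
    rw [Module.finrank_eq_nat_card_basis (MonoidAlgebra.basis QD32 F)]
    exact QD32.card_le
  have hfin' : Module.finrank F (F × F × F × F ×
        Matrix (Fin 2) (Fin 2) F × Matrix (Fin 2) (Fin 2) F × Matrix (Fin 2) (Fin 2) F ×
        Matrix (Fin 2) (Fin 2) F × Matrix (Fin 2) (Fin 2) F × Matrix (Fin 2) (Fin 2) F ×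
        Matrix (Fin 2) (Fin 2) F) = 32 := by
    simp [Module.finrank_prod, Module.finrank_matrix]
  have : FiniteDimensional F (MonoidAlgebra F QD32) :=
    Module.Finite.of_basis (MonoidAlgebra.basis QD32 F)
  obtain ⟨Φ, hΦ⟩ : ∃ Φ : MonoidAlgebra F QD32 →ₐ[F] (F × F × F × F ×
        Matrix (Fin 2) (Fin 2) F × Matrix (Fin 2) (Fin 2) F × Matrix (Fin 2) (Fin 2) F ×
        Matrix (Fin 2) (Fin 2) F × Matrix (Fin 2) (Fin 2) F × Matrix (Fin 2) (Fin 2) F ×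
        Matrix (Fin 2) (Fin 2) F), Function.Surjective Φ := ⟨_, S⟩
  have hsurj : Function.Surjective Φ.toLinearMap := hΦ
  have hdim := le_antisymm (hfin.trans hfin'.ge)
    (LinearMap.finrank_le_finrank_of_surjective hsurj)
  have hinj : Function.Injective Φ.toLinearMap :=
    (LinearMap.injective_iff_surjective_of_finrank_eq_finrank hdim).mpr hsurj
  exact ⟨AlgEquiv.ofBijective Φ ⟨hinj, hΦ⟩⟩
end

section
/- Let F_q be a finite field of odd characteristic p with q = p^n elements. If q ≡ -1 (mod 16) or q ≡ -7 (mod 16), then the unit group U(F_q[QD_32]) is isomorphic to C_{q-1}^4 × GL(2,F_q)^3 × GL(2,F_{q^2})^2; and if q ≡ ±3 (mod 16) or q ≡ ±5 (mod 16), then U(F_q[QD_32]) is isomorphic to C_{q-1}^4 × GL(2,F_q) × GL(2,F_{q^2}) × GL(2,F_{q^4}), where F_{q^m} denotes the field with q^m elements. -/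
namespace QDProof

open Matrix

/-- generator `a` -/
def ga : QD32 := (PresentedGroup.of (rels := qdRels 5) 0 : PresentedGroup (qdRels 5))
/-- generator `x` -/
def gx : QD32 := (PresentedGroup.of (rels := qdRels 5) 1 : PresentedGroup (qdRels 5))

lemma ga_pow : ga ^ 16 = 1 := by
  have h := PresentedGroup.one_of_mem (rels := qdRels 5)
    (x := FreeGroup.of 0 ^ (2 ^ (5 - 1))) (by simp [qdRels])
  simpa using! h

lemma gx_sq : gx * gx = 1 := by
  have h := PresentedGroup.one_of_mem (rels := qdRels 5)
    (x := FreeGroup.of 1 ^ 2) (by simp [qdRels])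
  rw [← pow_two]
  simpa using! h

lemma gx_conj : gx * ga * gx = ga ^ 7 := by
  have h := PresentedGroup.one_of_mem (rels := qdRels 5)
    (x := FreeGroup.of 1 * FreeGroup.of 0 * FreeGroup.of 1 *
      (FreeGroup.of 0 ^ (2 ^ (5 - 2) - 1))⁻¹) (by simp [qdRels])
  rw [map_mul, map_inv, mul_inv_eq_one] at h
  simpa using! h

lemma gx_ga : gx * ga = ga ^ 7 * gx := by
  rw [← gx_conj, mul_assoc, gx_sq, mul_one]

lemma gx_ga_pow (k : ℕ) : gx * ga ^ k = ga ^ (7 * k) * gx := by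
  induction k with
  | zero => simp
  | succ k ih => rw [pow_succ, ← mul_assoc, ih, mul_assoc, gx_ga, ← mul_assoc, ← pow_add]; ring_nf

/-- normal form predicate -/
def NF (g : QD32) : Prop := ∃ i : ℕ, g = ga ^ i ∨ g = ga ^ i * gx

lemma NF_mul {g h : QD32} (hg : NF g) (hh : NF h) : NF (g * h) := by
  obtain ⟨i, rfl | rfl⟩ := hg <;> obtain ⟨j, rfl | rfl⟩ := hh
  · exact ⟨i + j, Or.inl (pow_add _ _ _).symm⟩
  · exact ⟨i + j, Or.inr (by rw [pow_add, mul_assoc])⟩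
  · exact ⟨i + 7 * j, Or.inr (by rw [mul_assoc, gx_ga_pow, pow_add, mul_assoc])⟩
  · exact ⟨i + 7 * j, Or.inl (by
      rw [mul_assoc, ← mul_assoc gx, gx_ga_pow, pow_add, mul_assoc (ga ^ (7 * j)), gx_sq, mul_one])⟩

lemma NF_inv {g : QD32} (hg : NF g) : NF g⁻¹ := by
  have key : ∀ i : ℕ, (ga ^ i)⁻¹ = ga ^ (15 * i) := fun i => by
    rw [inv_eq_iff_mul_eq_one, ← pow_add, show i + 15 * i = 16 * i by ring, pow_mul, ga_pow, one_pow]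
  have kx : gx⁻¹ = gx := inv_eq_of_mul_eq_one_left gx_sq
  obtain ⟨i, rfl | rfl⟩ := hg
  · exact ⟨15 * i, Or.inl (key i)⟩
  · rw [_root_.mul_inv_rev, key, kx, gx_ga_pow]
    exact ⟨_, Or.inr rfl⟩

lemma NF_all (g : QD32) : NF g := by
  have hg : g ∈ Subgroup.closure (Set.range
      (PresentedGroup.of : Fin 2 → PresentedGroup (qdRels 5))) := by
    rw [PresentedGroup.closure_range_of]; exact Subgroup.mem_top _
  induction hg using Subgroup.closure_induction with
  | mem x hx =>
    obtain ⟨i, rfl⟩ := hx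
    fin_cases i
    · exact ⟨1, Or.inl (pow_one _).symm⟩
    · exact ⟨0, Or.inr (by rw [pow_zero, one_mul]; rfl)⟩
  | one => exact ⟨0, Or.inl rfl⟩
  | mul x y _ _ hx hy => exact NF_mul hx hy
  | inv x _ hx => exact NF_inv hx

lemma NF_fin (g : QD32) : ∃ i : Fin 16, g = ga ^ (i : ℕ) ∨ g = ga ^ (i : ℕ) * gx := by
  obtain ⟨i, h⟩ := NF_all g
  refine ⟨⟨i % 16, Nat.mod_lt _ (by norm_num)⟩, ?_⟩
  rwa [pow_eq_pow_mod i ga_pow] at h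

lemma exists_hom {M : Type*} [Monoid M] (a x : M) (ha : a ^ 16 = 1) (hx : x * x = 1)
    (hc : x * a * x = a ^ 7) : ∃ φ : QD32 →* M, φ ga = a ∧ φ gx = x := by
  let ua : Mˣ := ⟨a, a ^ 15, by rw [← pow_succ', ha], by rw [← pow_succ, ha]⟩
  let ux : Mˣ := ⟨x, x, hx, hx⟩
  have h : ∀ r ∈ qdRels 5, FreeGroup.lift (![ua, ux] : Fin 2 → Mˣ) r = 1 := by
    intro r hr
    simp only [qdRels, Set.mem_insert_iff, Set.mem_singleton_iff] at hr
    rcases hr with rfl | rfl | rfl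
    · ext; simp [ua, ha]
    · ext; simp [ux, pow_two, hx]
    · rw [map_mul, map_inv, mul_inv_eq_one]
      ext; simp [ux, ua, hc]
  refine ⟨(Units.coeHom M).comp (PresentedGroup.toGroup h), ?_, ?_⟩
  · change ((PresentedGroup.toGroup h (PresentedGroup.of 0) : Mˣ) : M) = a
    rw [PresentedGroup.toGroup.of]; rfl
  · change ((PresentedGroup.toGroup h (PresentedGroup.of 1) : Mˣ) : M) = x
    rw [PresentedGroup.toGroup.of]; rfl

section
variable {F : Type} [Field F]

/-- the spanning map -/
noncomputable def S : ((Fin 16 → F) × (Fin 16 → F)) →ₗ[F] MonoidAlgebra F QD32 where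
  toFun cd := ∑ i : Fin 16, (cd.1 i • MonoidAlgebra.of F QD32 (ga ^ (i : ℕ)) +
    cd.2 i • MonoidAlgebra.of F QD32 (ga ^ (i : ℕ) * gx))
  map_add' u v := by
    rw [← Finset.sum_add_distrib]
    refine Finset.sum_congr rfl fun i _ => ?_
    simp only [Prod.fst_add, Prod.snd_add, Pi.add_apply, add_smul]; abel
  map_smul' r u := by
    rw [Finset.smul_sum]
    refine Finset.sum_congr rfl fun i _ => ?_
    simp only [Prod.smul_fst, Prod.smul_snd, Pi.smul_apply, smul_eq_mul, mul_smul, smul_add,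
      RingHom.id_apply]

lemma S_surj : Function.Surjective (S (F := F)) := by
  intro f
  change f ∈ LinearMap.range (S (F := F))
  induction f using MonoidAlgebra.induction_linear with
  | zero => exact Submodule.zero_mem _
  | add f g hf hg => exact Submodule.add_mem _ hf hg
  | single g r =>
    obtain ⟨i, rfl | rfl⟩ := NF_fin g
    · refine ⟨(Pi.single i r, 0), ?_⟩
      simp only [S, LinearMap.coe_mk, AddHom.coe_mk, Pi.zero_apply, zero_smul, add_zero]
      rw [Finset.sum_eq_single i]
      · simp [MonoidAlgebra.smul_single]
      · intro b _ hb; simp [hb]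
      · simp
    · refine ⟨(0, Pi.single i r), ?_⟩
      simp only [S, LinearMap.coe_mk, AddHom.coe_mk, Pi.zero_apply, zero_smul, zero_add]
      rw [Finset.sum_eq_single i]
      · simp [MonoidAlgebra.smul_single]
      · intro b _ hb; simp [hb]
      · simp

/-- evaluation of the coefficient vector `c` as a polynomial -/
noncomputable def E {B : Type*} [Ring B] [Algebra F B] (c : Fin 16 → F) (b : B) : B :=
  ∑ i : Fin 16, c i • b ^ (i : ℕ)

lemma exists_algHom {B : Type*} [Ring B] [Algebra F B] (a x : B) (ha : a ^ 16 = 1)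
    (hx : x * x = 1) (hc : x * a * x = a ^ 7) :
    ∃ ρ : MonoidAlgebra F QD32 →ₐ[F] B, ∀ cd, ρ (S cd) = E cd.1 a + E cd.2 a * x := by
  obtain ⟨φ, h1, h2⟩ := exists_hom a x ha hx hc
  refine ⟨MonoidAlgebra.lift F B QD32 φ, fun cd => ?_⟩
  simp only [S, E, LinearMap.coe_mk, AddHom.coe_mk, map_sum, map_add, map_smul,
    MonoidAlgebra.lift_of, map_mul, map_pow, h1, h2, Finset.sum_add_distrib, Finset.sum_mul,
    smul_mul_assoc]

lemma E_map {B B' : Type*} [Ring B] [Algebra F B] [Ring B'] [Algebra F B'] (f : B →ₐ[F] B')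
    (c : Fin 16 → F) (b : B) : f (E c b) = E c (f b) := by
  simp [E]

/-- linear characters -/
lemma exists_lin (e d : F) (he : e * e = 1) (hd : d * d = 1) :
    ∃ ρ : MonoidAlgebra F QD32 →ₐ[F] F, ∀ cd, ρ (S cd) = E cd.1 e + E cd.2 e * d := by
  have h2 : e ^ 2 = 1 := by rw [pow_two, he]
  apply exists_algHom e d
  · rw [show 16 = 2 * 8 by norm_num, pow_mul, h2, one_pow]
  · exact hd
  · rw [show e ^ 7 = (e ^ 2) ^ 3 * e by ring, h2, mul_right_comm, hd]; ring

lemma vec_inj {L : Type*} [Field L] {α β : L} (hne : α ≠ β) (M N : Matrix (Fin 2) (Fin 2) L)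
    (h1 : ![1, α] ᵥ* M = ![1, α] ᵥ* N) (h2 : ![1, β] ᵥ* M = ![1, β] ᵥ* N) : M = N := by
  have hs : α - β ≠ 0 := sub_ne_zero.mpr hne
  have key : ∀ j, M 0 j = N 0 j ∧ M 1 j = N 1 j := by
    intro j
    have a1 := congrFun h1 j
    have a2 := congrFun h2 j
    simp [Matrix.vecMul, dotProduct, Fin.sum_univ_two] at a1 a2
    have : (α - β) * (M 1 j - N 1 j) = 0 := by linear_combination a1 - a2
    have h3 : M 1 j = N 1 j := by
      rcases mul_eq_zero.mp this with h | h
      · exact absurd h hs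
      · exact sub_eq_zero.mp h
    refine ⟨?_, h3⟩
    rw [h3] at a1
    exact add_right_cancel a1
  ext i j
  fin_cases i
  · exact (key j).1
  · exact (key j).2

lemma eig_pow {L : Type*} [Field L] {v : Fin 2 → L} {A : Matrix (Fin 2) (Fin 2) L} {α : L}
    (h : v ᵥ* A = α • v) (k : ℕ) : v ᵥ* (A ^ k) = α ^ k • v := by
  induction k with
  | zero => simp
  | succ k ih =>
    rw [pow_succ, ← Matrix.vecMul_vecMul, ih, Matrix.smul_vecMul, h, smul_smul, pow_succ]

lemma eig_E {L : Type*} [Field L] [Algebra F L] {v : Fin 2 → L} {A : Matrix (Fin 2) (Fin 2) L}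
    {α : L} (h : v ᵥ* A = α • v) (c : Fin 16 → F) : v ᵥ* (E c A) = E c α • v := by
  simp only [E, Finset.sum_smul]
  have : v ᵥ* (∑ i : Fin 16, c i • A ^ (i : ℕ)) = ∑ i : Fin 16, v ᵥ* (c i • A ^ (i : ℕ)) :=
    map_sum (Matrix.vecMulBilin (A := L) ℕ ℕ v : Matrix (Fin 2) (Fin 2) L →ₗ[ℕ] _) _ _
  rw [this]
  refine Finset.sum_congr rfl fun i _ => ?_
  rw [Matrix.vecMul_smul, eig_pow h, smul_assoc]

lemma exists_rep {K L : Type} [Field K] [Algebra F K] [Field L] [Algebra F L] (ι : K →ₐ[F] L)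
    (α β : L) (t n : K) (ht : ι t = α + β) (hn : ι n = α * β) (hne : α ≠ β)
    (hα : α ^ 16 = 1) (hβ : β ^ 16 = 1) (h7 : α ^ 7 = β) (h7' : β ^ 7 = α) :
    ∃ ρ : MonoidAlgebra F QD32 →ₐ[F] Matrix (Fin 2) (Fin 2) K, ∀ cd, ρ (S cd) = 0 →
      (E cd.1 α = 0 ∧ E cd.1 β = 0) ∧ (E cd.2 α = 0 ∧ E cd.2 β = 0) := by
  let f : Matrix (Fin 2) (Fin 2) K →ₐ[F] Matrix (Fin 2) (Fin 2) L := ι.mapMatrix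
  have finj : Function.Injective f := by
    intro M N h
    ext i j
    exact ι.injective (congrFun (congrFun h i) j)
  let A : Matrix (Fin 2) (Fin 2) K := !![0, -n; 1, t]
  let X : Matrix (Fin 2) (Fin 2) K := !![1, t; 0, -1]
  have fA : f A = !![0, -(α * β); 1, α + β] := by
    ext i j
    fin_cases i <;> fin_cases j <;> simp [f, A, ht, hn]
  have fX : f X = !![1, α + β; 0, -1] := by
    ext i j
    fin_cases i <;> fin_cases j <;> simp [f, X, ht]
  have Aα : ![1, α] ᵥ* f A = α • ![1, α] := by
    rw [fA]; ext j; fin_cases j <;> simp [Matrix.vecMul, dotProduct, Fin.sum_univ_two]; ring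
  have Aβ : ![1, β] ᵥ* f A = β • ![1, β] := by
    rw [fA]; ext j; fin_cases j <;> simp [Matrix.vecMul, dotProduct, Fin.sum_univ_two]; ring
  have Xα : ![1, α] ᵥ* f X = ![1, β] := by
    rw [fX]; ext j; fin_cases j <;> simp [Matrix.vecMul, dotProduct, Fin.sum_univ_two]
  have Xβ : ![1, β] ᵥ* f X = ![1, α] := by
    rw [fX]; ext j; fin_cases j <;> simp [Matrix.vecMul, dotProduct, Fin.sum_univ_two]
  have r1 : A ^ 16 = 1 := by
    apply finj
    rw [map_pow, map_one]
    apply vec_inj hne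
    · rw [eig_pow Aα, hα, one_smul, Matrix.vecMul_one]
    · rw [eig_pow Aβ, hβ, one_smul, Matrix.vecMul_one]
  have r2 : X * X = 1 := by
    apply finj
    rw [map_mul, map_one]
    apply vec_inj hne
    · rw [← Matrix.vecMul_vecMul, Xα, Xβ, Matrix.vecMul_one]
    · rw [← Matrix.vecMul_vecMul, Xβ, Xα, Matrix.vecMul_one]
  have r3 : X * A * X = A ^ 7 := by
    apply finj
    rw [map_mul, map_mul, map_pow]
    apply vec_inj hne
    · rw [eig_pow Aα, ← Matrix.vecMul_vecMul, ← Matrix.vecMul_vecMul, Xα, Aβ,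
        Matrix.smul_vecMul, Xβ, h7]
    · rw [eig_pow Aβ, ← Matrix.vecMul_vecMul, ← Matrix.vecMul_vecMul, Xβ, Aα,
        Matrix.smul_vecMul, Xα, h7']
  obtain ⟨ρ, hρ⟩ := exists_algHom (F := F) A X r1 r2 r3
  refine ⟨ρ, fun cd h0 => ?_⟩
  rw [hρ] at h0
  have h1 := congrArg f h0
  rw [map_add, map_mul, map_zero, E_map, E_map] at h1
  have e1 : ![1, α] ᵥ* (E cd.1 (f A) + E cd.2 (f A) * f X) = 0 := by rw [h1, Matrix.vecMul_zero]
  have e2 : ![1, β] ᵥ* (E cd.1 (f A) + E cd.2 (f A) * f X) = 0 := by rw [h1, Matrix.vecMul_zero]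
  rw [Matrix.vecMul_add, ← Matrix.vecMul_vecMul, eig_E Aα, eig_E Aα, Matrix.smul_vecMul, Xα] at e1
  rw [Matrix.vecMul_add, ← Matrix.vecMul_vecMul, eig_E Aβ, eig_E Aβ, Matrix.smul_vecMul, Xβ] at e2
  have a0 := congrFun e1 0
  have a1 := congrFun e1 1
  have b0 := congrFun e2 0
  have b1 := congrFun e2 1
  simp at a0 a1 b0 b1
  have hs : α - β ≠ 0 := sub_ne_zero.mpr hne
  have k1 : (α - β) * E cd.1 α = 0 := by linear_combination a1 - β * a0
  have k2 : (α - β) * E cd.1 β = 0 := by linear_combination α * b0 - b1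
  have k1' := (mul_eq_zero.mp k1).resolve_left hs
  have k2' := (mul_eq_zero.mp k2).resolve_left hs
  rw [k1', zero_add] at a0
  rw [k2', zero_add] at b0
  exact ⟨⟨k1', k2'⟩, a0, b0⟩

lemma mem_range_of_pow {K L : Type} [Field K] [Fintype K] [Field L] (ι : K →+* L) (y : L)
    (hy : y ^ Fintype.card K = y) : ∃ k, ι k = y := by
  classical
  by_contra hcon
  push Not at hcon
  let P : Polynomial L := Polynomial.X ^ Fintype.card K - Polynomial.X
  have hc : 1 < Fintype.card K := Fintype.one_lt_card
  have hP : P ≠ 0 := FiniteField.X_pow_card_sub_X_ne_zero L hc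
  have hd : P.natDegree = Fintype.card K := FiniteField.X_pow_card_sub_X_natDegree_eq L hc
  let s : Finset L := insert y (Finset.univ.image ι)
  have hs : s.card = Fintype.card K + 1 := by
    rw [Finset.card_insert_of_notMem, Finset.card_image_of_injective _ ι.injective,
      Finset.card_univ]
    simpa using hcon
  have hsub : s.val ⊆ P.roots := by
    intro z hz
    rw [Polynomial.mem_roots hP]
    have : z ∈ s := hz
    simp only [s, Finset.mem_insert, Finset.mem_image, Finset.mem_univ, true_and] at this
    rcases this with rfl | ⟨k, rfl⟩
    · simp [P, hy]
    · simp [P, ← map_pow, FiniteField.pow_card]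
  have := Polynomial.card_le_degree_of_subset_roots hsub
  omega

lemma pow_congr {L : Type} [Field L] {ζ : L} (hζ : ζ ^ 16 = 1) {i j : ℕ} (h : i % 16 = j % 16) :
    ζ ^ i = ζ ^ j := by
  rw [pow_eq_pow_mod i hζ, pow_eq_pow_mod j hζ, h]

lemma exists_comp {p : ℕ} [Fact p.Prime] {K L : Type} [Field K] [Fintype K] [Algebra F K]
    [Field L] [Algebra F L] [CharP L p] (ι : K →ₐ[F] L) {m : ℕ} (hK : Fintype.card K = p ^ m)
    {ζ : L} (hζ : IsPrimitiveRoot ζ 16) (i : ℕ)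
    (hi : i % 16 ≠ 7 * i % 16)
    (h : i * Fintype.card K % 16 = i % 16 ∨ i * Fintype.card K % 16 = 7 * i % 16) :
    ∃ ρ : MonoidAlgebra F QD32 →ₐ[F] Matrix (Fin 2) (Fin 2) K, ∀ cd, ρ (S cd) = 0 →
      (E cd.1 (ζ ^ i) = 0 ∧ E cd.1 (ζ ^ (7 * i)) = 0) ∧
      (E cd.2 (ζ ^ i) = 0 ∧ E cd.2 (ζ ^ (7 * i)) = 0) := by
  have h1 := hζ.pow_eq_one
  obtain ⟨t, ht⟩ := mem_range_of_pow ι.toRingHom (ζ ^ i + ζ ^ (7 * i)) (by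
    rw [hK, add_pow_char_pow, ← hK, ← pow_mul, ← pow_mul]
    rcases h with h | h
    · rw [pow_congr h1 h, pow_congr h1 (i := 7 * i * _) (j := 7 * i)]
      rw [mul_assoc, Nat.mul_mod, h, ← Nat.mul_mod]
    · rw [pow_congr h1 h, pow_congr h1 (i := 7 * i * _) (j := i), add_comm]
      rw [mul_assoc, Nat.mul_mod, h, ← Nat.mul_mod]
      omega)
  obtain ⟨n, hn⟩ := mem_range_of_pow ι.toRingHom (ζ ^ i * ζ ^ (7 * i)) (by
    rw [mul_pow, ← pow_mul, ← pow_mul]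
    rcases h with h | h
    · rw [pow_congr h1 h, pow_congr h1 (i := 7 * i * _) (j := 7 * i)]
      rw [mul_assoc, Nat.mul_mod, h, ← Nat.mul_mod]
    · rw [pow_congr h1 h, pow_congr h1 (i := 7 * i * _) (j := i), mul_comm]
      rw [mul_assoc, Nat.mul_mod, h, ← Nat.mul_mod]
      omega)
  refine exists_rep ι (ζ ^ i) (ζ ^ (7 * i)) t n ht hn ?_ ?_ ?_ ?_ ?_
  · intro he
    rw [pow_eq_pow_mod i h1, pow_eq_pow_mod (7 * i) h1] at he
    exact hi (hζ.pow_inj (Nat.mod_lt _ (by norm_num)) (Nat.mod_lt _ (by norm_num)) he)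
  · rw [pow_right_comm, h1, one_pow]
  · rw [pow_right_comm, h1, one_pow]
  · rw [← pow_mul, mul_comm]
  · rw [← pow_mul]; exact pow_congr h1 (by omega)

lemma all16 {P : ℕ → Prop} (z0 : P 0) (z1 : P 1) (z2 : P 2) (z3 : P 3) (z4 : P 4) (z5 : P 5)
    (z6 : P 6) (z7 : P 7) (z8 : P 8) (z9 : P 9) (z10 : P 10) (z11 : P 11) (z12 : P 12)
    (z13 : P 13) (z14 : P 14) (z15 : P 15) : ∀ j < 16, P j := by
  intro j hj
  interval_cases j <;> assumption

lemma E_frob [Fintype F] {L : Type} [Field L] [Algebra F L] {ζ : L} (hζ : ζ ^ 16 = 1)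
    (c : Fin 16 → F) {i : ℕ} (j : ℕ) (h : E c (ζ ^ i) = 0)
    (hij : i * Fintype.card F % 16 = j % 16) : E c (ζ ^ j) = 0 := by
  have h2 := congrArg (FiniteField.frobeniusAlgHom F L) h
  rw [E_map, map_zero] at h2
  change E c ((ζ ^ i) ^ Fintype.card F) = 0 at h2
  rw [← pow_mul] at h2
  rwa [pow_congr hζ hij] at h2

lemma E_zero {L : Type} [Field L] [Algebra F L] {ζ : L} (hζ : IsPrimitiveRoot ζ 16)
    (c : Fin 16 → F) (h : ∀ j < 16, E c (ζ ^ j) = 0) : c = 0 := by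
  have := Matrix.eq_zero_of_forall_index_sum_mul_pow_eq_zero (R := L)
    (f := fun j : Fin 16 => ζ ^ (j : ℕ)) (v := fun i => algebraMap F L (c i)) (by
      intro a b hab
      exact Fin.ext (hζ.pow_inj a.2 b.2 hab)) (by
      intro j
      have := h j j.2
      simpa [E, Algebra.smul_def] using this)
  funext i
  have h3 := congrFun this i
  simpa using h3

lemma E_pm (h2 : (2 : F) ≠ 0) {L : Type} [Field L] [Algebra F L] {e : F}
    {c d : Fin 16 → F} (hp : E c e + E d e * 1 = 0) (hm : E c e + E d e * (-1) = 0) :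
    E c (algebraMap F L e) = 0 ∧ E d (algebraMap F L e) = 0 := by
  have hc : E c e = 0 := by
    have : 2 * E c e = 0 := by linear_combination hp + hm
    exact (mul_eq_zero.mp this).resolve_left h2
  have hd : E d e = 0 := by rw [hc] at hp; simpa using hp
  constructor
  · have := E_map (Algebra.ofId F L) c e
    rw [hc, map_zero] at this
    exact this.symm
  · have := E_map (Algebra.ofId F L) d e
    rw [hd, map_zero] at this
    exact this.symm

lemma bij_of {T : Type} [Ring T] [Algebra F T] [FiniteDimensional F T]
    (hT : Module.finrank F T = 32) (Φ : MonoidAlgebra F QD32 →ₐ[F] T)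
    (h : ∀ cd, Φ (S cd) = 0 → cd = 0) : Function.Bijective Φ := by
  have hinj : Function.Injective (Φ.toLinearMap ∘ₗ S) := by
    rw [injective_iff_map_eq_zero]
    exact h
  have hsurj : Function.Surjective (Φ.toLinearMap ∘ₗ S) := by
    rw [← LinearMap.injective_iff_surjective_of_finrank_eq_finrank]
    · exact hinj
    · rw [hT]; simp
  constructor
  · rw [injective_iff_map_eq_zero]
    intro f hf
    obtain ⟨cd, rfl⟩ := S_surj f
    rw [h cd hf, map_zero]
  · intro t
    obtain ⟨cd, hcd⟩ := hsurj t
    exact ⟨S cd, hcd⟩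

lemma units_cyc (F : Type) [Field F] [Fintype F] :
    Nonempty (Fˣ ≃* Multiplicative (ZMod (Fintype.card F - 1))) := by
  classical
  refine ⟨mulEquivOfCyclicCardEq ?_⟩
  rw [Nat.card_eq_fintype_card, Fintype.card_units]
  rw [Nat.card_congr Multiplicative.toAdd, Nat.card_zmod]

lemma finrank_of_card [Fintype F] {K : Type} [Field K] [Fintype K] [Algebra F K] {m : ℕ}
    (h : Fintype.card K = Fintype.card F ^ m) : Module.finrank F K = m := by
  have := Module.card_eq_pow_finrank (K := F) (V := K)
  rw [h] at this
  exact (Nat.pow_right_injective (Fintype.one_lt_card (α := F)) this).symm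

end

end QDProof

/-- For `q ≡ -1, -7 (mod 16)`, `U(F_q[QD_32]) ≅ C_{q-1}⁴ × GL(2,F_q)³ × GL(2,F_{q²})²`,
and for `q ≡ ±3, ±5 (mod 16)`,
`U(F_q[QD_32]) ≅ C_{q-1}⁴ × GL(2,F_q) × GL(2,F_{q²}) × GL(2,F_{q⁴})`. -/
theorem unitGroup_QD32_remaining_cases (F : Type) [Field F] [Fintype F]
    (p n : ℕ) [Fact p.Prime] (hp : Odd p) [CharP F p]
    (hn : 0 < n) (hq : Fintype.card F = p ^ n)
    (K₂ : Type) [Field K₂] [Fintype K₂] [Algebra F K₂]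
    (hK₂ : Fintype.card K₂ = Fintype.card F ^ 2)
    (K₄ : Type) [Field K₄] [Fintype K₄] [Algebra F K₄]
    (hK₄ : Fintype.card K₄ = Fintype.card F ^ 4) :
    ((Fintype.card F % 16 = 15 ∨ Fintype.card F % 16 = 9) →
      Nonempty ((MonoidAlgebra F QD32)ˣ ≃*
        (Multiplicative (ZMod (Fintype.card F - 1)) ×
         Multiplicative (ZMod (Fintype.card F - 1)) ×
         Multiplicative (ZMod (Fintype.card F - 1)) ×
         Multiplicative (ZMod (Fintype.card F - 1)) ×
         Matrix.GeneralLinearGroup (Fin 2) F ×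
         Matrix.GeneralLinearGroup (Fin 2) F ×
         Matrix.GeneralLinearGroup (Fin 2) F ×
         Matrix.GeneralLinearGroup (Fin 2) K₂ ×
         Matrix.GeneralLinearGroup (Fin 2) K₂))) ∧
    ((Fintype.card F % 16 = 3 ∨ Fintype.card F % 16 = 13 ∨
        Fintype.card F % 16 = 5 ∨ Fintype.card F % 16 = 11) →
      Nonempty ((MonoidAlgebra F QD32)ˣ ≃*
        (Multiplicative (ZMod (Fintype.card F - 1)) ×
         Multiplicative (ZMod (Fintype.card F - 1)) ×
         Multiplicative (ZMod (Fintype.card F - 1)) ×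
         Multiplicative (ZMod (Fintype.card F - 1)) ×
         Matrix.GeneralLinearGroup (Fin 2) F ×
         Matrix.GeneralLinearGroup (Fin 2) K₂ ×
         Matrix.GeneralLinearGroup (Fin 2) K₄))) := by
  classical
  have hodd : Fintype.card F % 2 = 1 := by
    rw [hq]; exact Nat.odd_iff.mp (hp.pow)
  have hp2 : p ≠ 2 := by rintro rfl; revert hp; decide
  let L := AlgebraicClosure F
  have : CharP L p := charP_of_injective_algebraMap (algebraMap F L).injective p
  have h2F : (2 : F) ≠ 0 := Ring.two_ne_zero (by rw [ringChar.eq F p]; exact hp2)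
  have h2L : (2 : L) ≠ 0 := Ring.two_ne_zero (by rw [ringChar.eq L p]; exact hp2)
  have : NeZero ((16 : ℕ) : L) := ⟨by
    have : ((16 : ℕ) : L) = 2 ^ 4 := by norm_num
    rw [this]; exact pow_ne_zero _ h2L⟩
  obtain ⟨ζ, hζ⟩ := HasEnoughRootsOfUnity.exists_primitiveRoot L 16
  have h16 := hζ.pow_eq_one
  have hζ8 : ζ ^ 8 = -1 := by
    have h8 : ζ ^ 8 ≠ 1 := hζ.pow_ne_one_of_pos_of_lt (by norm_num) (by norm_num)
    have : (ζ ^ 8 - 1) * (ζ ^ 8 + 1) = 0 := by linear_combination h16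
    rcases mul_eq_zero.mp this with h | h
    · exact absurd (sub_eq_zero.mp h) h8
    · exact eq_neg_of_add_eq_zero_left h
  have : Module.Finite F K₂ := Module.Finite.of_finite
  have : Module.Finite F K₄ := Module.Finite.of_finite
  let ι₁ : F →ₐ[F] L := Algebra.ofId F L
  let ι₂ : K₂ →ₐ[F] L := IsAlgClosed.lift
  let ι₄ : K₄ →ₐ[F] L := IsAlgClosed.lift
  have hq2 : Fintype.card K₂ = p ^ (n * 2) := by rw [hK₂, hq, pow_mul]
  have hq4 : Fintype.card K₄ = p ^ (n * 4) := by rw [hK₄, hq, pow_mul]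
  have f2 : Module.finrank F K₂ = 2 := QDProof.finrank_of_card hK₂
  have f4 : Module.finrank F K₄ = 4 := QDProof.finrank_of_card hK₄
  obtain ⟨c⟩ := QDProof.units_cyc F
  obtain ⟨χ₁, hχ₁⟩ := QDProof.exists_lin (1 : F) 1 (by ring) (by ring)
  obtain ⟨χ₂, hχ₂⟩ := QDProof.exists_lin (1 : F) (-1) (by ring) (by ring)
  obtain ⟨χ₃, hχ₃⟩ := QDProof.exists_lin (-1 : F) 1 (by ring) (by ring)
  obtain ⟨χ₄, hχ₄⟩ := QDProof.exists_lin (-1 : F) (-1) (by ring) (by ring)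
  have lin : ∀ cd, χ₁ (QDProof.S cd) = 0 → χ₂ (QDProof.S cd) = 0 → χ₃ (QDProof.S cd) = 0 →
      χ₄ (QDProof.S cd) = 0 →
      (QDProof.E cd.1 (ζ ^ 0) = 0 ∧ QDProof.E cd.2 (ζ ^ 0) = 0) ∧
      (QDProof.E cd.1 (ζ ^ 8) = 0 ∧ QDProof.E cd.2 (ζ ^ 8) = 0) := by
    intro cd a1 a2 a3 a4
    rw [hχ₁] at a1; rw [hχ₂] at a2; rw [hχ₃] at a3; rw [hχ₄] at a4
    have u := QDProof.E_pm (L := L) h2F a1 a2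
    have v := QDProof.E_pm (L := L) h2F a3 a4
    rw [map_one] at u
    rw [map_neg, map_one] at v
    rw [pow_zero, hζ8]
    exact ⟨u, v⟩
  constructor
  · intro hmod
    have hm2 : Fintype.card K₂ % 16 = 1 := by
      rw [hK₂, Nat.pow_mod]; rcases hmod with h | h <;> rw [h]
    obtain ⟨ρ₁, hρ₁⟩ := QDProof.exists_comp (p := p) ι₁ hq hζ 4 (by norm_num) (by omega)
    obtain ⟨ρ₂, hρ₂⟩ := QDProof.exists_comp (p := p) ι₁ hq hζ 2 (by norm_num) (by omega)
    obtain ⟨ρ₃, hρ₃⟩ := QDProof.exists_comp (p := p) ι₁ hq hζ 6 (by norm_num) (by omega)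
    obtain ⟨ρ₄, hρ₄⟩ := QDProof.exists_comp (p := p) ι₂ hq2 hζ 1 (by norm_num) (by omega)
    obtain ⟨ρ₅, hρ₅⟩ := QDProof.exists_comp (p := p) ι₂ hq2 hζ 3 (by norm_num) (by omega)
    let Φ := χ₁.prod (χ₂.prod (χ₃.prod (χ₄.prod (ρ₁.prod (ρ₂.prod (ρ₃.prod (ρ₄.prod ρ₅)))))))
    have hcomb : ∀ e : Fin 16 → F, QDProof.E e (ζ ^ 0) = 0 → QDProof.E e (ζ ^ 8) = 0 →
        (QDProof.E e (ζ ^ 4) = 0 ∧ QDProof.E e (ζ ^ (7 * 4)) = 0) →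
        (QDProof.E e (ζ ^ 2) = 0 ∧ QDProof.E e (ζ ^ (7 * 2)) = 0) →
        (QDProof.E e (ζ ^ 6) = 0 ∧ QDProof.E e (ζ ^ (7 * 6)) = 0) →
        (QDProof.E e (ζ ^ 1) = 0 ∧ QDProof.E e (ζ ^ (7 * 1)) = 0) →
        (QDProof.E e (ζ ^ 3) = 0 ∧ QDProof.E e (ζ ^ (7 * 3)) = 0) → e = 0 := by
      rintro e z0 z8 ⟨z4, z12⟩ ⟨z2, z14⟩ ⟨z6, z10⟩ ⟨z1, z7⟩ ⟨z3, z5⟩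
      rw [QDProof.pow_congr h16 (j := 12) (by norm_num)] at z12
      rw [QDProof.pow_congr h16 (j := 10) (by norm_num)] at z10
      rw [QDProof.pow_congr h16 (j := 5) (by norm_num)] at z5
      have fr : ∀ i j, QDProof.E e (ζ ^ i) = 0 → i * Fintype.card F % 16 = j % 16 →
        QDProof.E e (ζ ^ j) = 0 := fun i j h h' => QDProof.E_frob h16 e j h h'
      have z9 : QDProof.E e (ζ ^ 9) = 0 := by
        rcases hmod with h | h
        · exact fr _ 9 z7 (by omega)
        · exact fr _ 9 z1 (by omega)
      have z15 : QDProof.E e (ζ ^ 15) = 0 := by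
        rcases hmod with h | h
        · exact fr _ 15 z1 (by omega)
        · exact fr _ 15 z7 (by omega)
      have z11 : QDProof.E e (ζ ^ 11) = 0 := by
        rcases hmod with h | h
        · exact fr _ 11 z5 (by omega)
        · exact fr _ 11 z3 (by omega)
      have z13 : QDProof.E e (ζ ^ 13) = 0 := by
        rcases hmod with h | h
        · exact fr _ 13 z3 (by omega)
        · exact fr _ 13 z5 (by omega)
      apply QDProof.E_zero hζ
      exact QDProof.all16 (P := fun j => QDProof.E e (ζ ^ j) = 0) z0 z1 z2 z3 z4 z5 z6 z7 z8 z9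
          z10 z11 z12 z13 z14 z15
    have hb : Function.Bijective Φ := by
      apply QDProof.bij_of
      · simp [Module.finrank_prod, Module.finrank_matrix, f2]
      · intro cd h
        simp only [Φ, AlgHom.prod_apply, Prod.mk_eq_zero] at h
        obtain ⟨a1, a2, a3, a4, b1, b2, b3, b4, b5⟩ := h
        have l := lin cd a1 a2 a3 a4
        have b1 := hρ₁ cd b1
        have b2 := hρ₂ cd b2
        have b3 := hρ₃ cd b3
        have b4 := hρ₄ cd b4
        have b5 := hρ₅ cd b5
        exact Prod.ext (hcomb cd.1 l.1.1 l.2.1 b1.1 b2.1 b3.1 b4.1 b5.1)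
          (hcomb cd.2 l.1.2 l.2.2 b1.2 b2.2 b3.2 b4.2 b5.2)
    exact ⟨(Units.mapEquiv (MulEquiv.ofBijective Φ hb)).trans <|
      MulEquiv.prodUnits.trans <| c.prodCongr <|
      MulEquiv.prodUnits.trans <| c.prodCongr <|
      MulEquiv.prodUnits.trans <| c.prodCongr <|
      MulEquiv.prodUnits.trans <| c.prodCongr <|
      MulEquiv.prodUnits.trans <| (MulEquiv.refl _).prodCongr <|
      MulEquiv.prodUnits.trans <| (MulEquiv.refl _).prodCongr <|
      MulEquiv.prodUnits.trans <| (MulEquiv.refl _).prodCongr <|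
      MulEquiv.prodUnits⟩
  · intro hmod
    have hm2 : Fintype.card K₂ % 16 = 9 := by
      rw [hK₂, Nat.pow_mod]; rcases hmod with h | h | h | h <;> rw [h]
    have hm4 : Fintype.card K₄ % 16 = 1 := by
      rw [hK₄, Nat.pow_mod]; rcases hmod with h | h | h | h <;> rw [h]
    obtain ⟨ρ₁, hρ₁⟩ := QDProof.exists_comp (p := p) ι₁ hq hζ 4 (by norm_num) (by omega)
    obtain ⟨ρ₂, hρ₂⟩ := QDProof.exists_comp (p := p) ι₂ hq2 hζ 2 (by norm_num) (by omega)
    obtain ⟨ρ₃, hρ₃⟩ := QDProof.exists_comp (p := p) ι₄ hq4 hζ 1 (by norm_num) (by omega)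
    let Φ := χ₁.prod (χ₂.prod (χ₃.prod (χ₄.prod (ρ₁.prod (ρ₂.prod ρ₃)))))
    have hcomb : ∀ e : Fin 16 → F, QDProof.E e (ζ ^ 0) = 0 → QDProof.E e (ζ ^ 8) = 0 →
        (QDProof.E e (ζ ^ 4) = 0 ∧ QDProof.E e (ζ ^ (7 * 4)) = 0) →
        (QDProof.E e (ζ ^ 2) = 0 ∧ QDProof.E e (ζ ^ (7 * 2)) = 0) →
        (QDProof.E e (ζ ^ 1) = 0 ∧ QDProof.E e (ζ ^ (7 * 1)) = 0) → e = 0 := by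
      rintro e z0 z8 ⟨z4, z12⟩ ⟨z2, z14⟩ ⟨z1, z7⟩
      rw [QDProof.pow_congr h16 (j := 12) (by norm_num)] at z12
      have fr : ∀ i j, QDProof.E e (ζ ^ i) = 0 → i * Fintype.card F % 16 = j % 16 →
        QDProof.E e (ζ ^ j) = 0 := fun i j h h' => QDProof.E_frob h16 e j h h'
      apply QDProof.E_zero hζ
      rcases hmod with h | h | h | h
      · have z3 := fr _ 3 z1 (by omega)
        have z5 := fr _ 5 z7 (by omega)
        have z9 := fr _ 9 z3 (by omega)
        have z15 := fr _ 15 z5 (by omega)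
        have z11 := fr _ 11 z9 (by omega)
        have z13 := fr _ 13 z15 (by omega)
        have z6 := fr _ 6 z2 (by omega)
        have z10 := fr _ 10 z14 (by omega)
        exact QDProof.all16 (P := fun j => QDProof.E e (ζ ^ j) = 0) z0 z1 z2 z3 z4 z5 z6 z7 z8 z9
          z10 z11 z12 z13 z14 z15
      · have z13 := fr _ 13 z1 (by omega)
        have z11 := fr _ 11 z7 (by omega)
        have z9 := fr _ 9 z13 (by omega)
        have z15 := fr _ 15 z11 (by omega)
        have z5 := fr _ 5 z9 (by omega)
        have z3 := fr _ 3 z15 (by omega)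
        have z10 := fr _ 10 z2 (by omega)
        have z6 := fr _ 6 z14 (by omega)
        exact QDProof.all16 (P := fun j => QDProof.E e (ζ ^ j) = 0) z0 z1 z2 z3 z4 z5 z6 z7 z8 z9
          z10 z11 z12 z13 z14 z15
      · have z5 := fr _ 5 z1 (by omega)
        have z3 := fr _ 3 z7 (by omega)
        have z9 := fr _ 9 z5 (by omega)
        have z15 := fr _ 15 z3 (by omega)
        have z13 := fr _ 13 z9 (by omega)
        have z11 := fr _ 11 z15 (by omega)
        have z10 := fr _ 10 z2 (by omega)
        have z6 := fr _ 6 z14 (by omega)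
        exact QDProof.all16 (P := fun j => QDProof.E e (ζ ^ j) = 0) z0 z1 z2 z3 z4 z5 z6 z7 z8 z9
          z10 z11 z12 z13 z14 z15
      · have z11 := fr _ 11 z1 (by omega)
        have z13 := fr _ 13 z7 (by omega)
        have z9 := fr _ 9 z11 (by omega)
        have z15 := fr _ 15 z13 (by omega)
        have z3 := fr _ 3 z9 (by omega)
        have z5 := fr _ 5 z15 (by omega)
        have z6 := fr _ 6 z2 (by omega)
        have z10 := fr _ 10 z14 (by omega)
        exact QDProof.all16 (P := fun j => QDProof.E e (ζ ^ j) = 0) z0 z1 z2 z3 z4 z5 z6 z7 z8 z9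
          z10 z11 z12 z13 z14 z15
    have hb : Function.Bijective Φ := by
      apply QDProof.bij_of
      · simp [Module.finrank_prod, Module.finrank_matrix, f2, f4]
      · intro cd h
        simp only [Φ, AlgHom.prod_apply, Prod.mk_eq_zero] at h
        obtain ⟨a1, a2, a3, a4, b1, b2, b3⟩ := h
        have l := lin cd a1 a2 a3 a4
        have b1 := hρ₁ cd b1
        have b2 := hρ₂ cd b2
        have b3 := hρ₃ cd b3
        exact Prod.ext (hcomb cd.1 l.1.1 l.2.1 b1.1 b2.1 b3.1)
          (hcomb cd.2 l.1.2 l.2.2 b1.2 b2.2 b3.2)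
    exact ⟨(Units.mapEquiv (MulEquiv.ofBijective Φ hb)).trans <|
      MulEquiv.prodUnits.trans <| c.prodCongr <|
      MulEquiv.prodUnits.trans <| c.prodCongr <|
      MulEquiv.prodUnits.trans <| c.prodCongr <|
      MulEquiv.prodUnits.trans <| c.prodCongr <|
      MulEquiv.prodUnits.trans <| (MulEquiv.refl _).prodCongr <|
      MulEquiv.prodUnits⟩
end
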